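/- Let p be an odd prime. If p ≡ 1 (mod 4), write p = x^2 + 4y^2 with integers x, y; then Σ_{n=0}^{p−1} n^2·T_n/4^n ≡ −4y^2 (mod p^3) and Σ_{n=0}^{p−1} n^3·T_n/4^n ≡ 2y^2 + p/4 + p^2/(64y^2) (mod p^3). If p ≡ 3 (mod 4), then Σ_{n=0}^{p−1} n^2·T_n/4^n ≡ −(1/4)R_1(p) − (1/2)p (mod p^2) and Σ_{n=0}^{p−1} n^3·T_n/4^n ≡ (3/8)R_1(p) + (1/2)p (mod p^2). -/

import Mathlib

/-- `a ≡ b (mod p^r)` for rationals: the numerator of `a - b` in lowest terms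
is divisible by `p^r`. -/
def ratCongr (p r : ℕ) (a b : ℚ) : Prop := (p : ℤ)^r ∣ (a - b).num
/-- `R_1(p) = (2p + 2 - 2^(p-1)) * C((p-1)/2, ⌊p/4⌋)^2`. -/
def R1 (p : ℕ) : ℚ :=
  (2*(p:ℚ) + 2 - 2^(p-1)) * (((p-1)/2).choose (p/4) : ℚ)^2

/-- `T_n = Σ_{k=0}^{n} C(n,k)^2·C(2k,n)^2`. -/
def seqT (n : ℕ) : ℚ :=
  ∑ k ∈ Finset.range (n+1), (n.choose k : ℚ)^2 * ((2*k).choose n : ℚ)^2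


namespace S17

/-! ### Part A : the second formula for `T_n` -/

def fT (n k : ℕ) : ℚ := (n.choose k : ℚ) * ((2*k).choose n : ℚ)

lemma fT_mul (n k : ℕ) (h1 : k ≤ n) (h2 : n ≤ 2*k) :
    fT n k = ((2*k).factorial : ℚ) / (k.factorial * (n-k).factorial * (2*k-n).factorial) := by
  unfold fT
  rw [Nat.cast_choose ℚ h1, Nat.cast_choose ℚ h2]
  have := Nat.factorial_ne_zero n
  field_simp

lemma fT_zero_left (n k : ℕ) (h : n < k) : fT n k = 0 := by
  unfold fT; rw [Nat.choose_eq_zero_of_lt h]; simp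
lemma fT_zero_right (n k : ℕ) (h : 2*k < n) : fT n k = 0 := by
  unfold fT; rw [Nat.choose_eq_zero_of_lt h]; simp

/-- pointwise certificate -/
lemma fT_cert (n k : ℕ) (hk : k ≤ n + 2) :
    ((n:ℚ)+2)^3 * fT (n+2) k ^2 - (2*(n:ℚ)+3)*(12*((n:ℚ)+1)^2+12*((n:ℚ)+1)+4) * fT (n+1) k ^2
      + 16*((n:ℚ)+1)^3 * fT n k ^2
    = fT (n+2) (k+1)^2 * (4*(2*(n:ℚ)+3)*((n:ℚ)+1-k)^2 - ((n:ℚ)+2)^3)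
      - fT (n+2) k^2 * (4*(2*(n:ℚ)+3)*((n:ℚ)+2-k)^2 - ((n:ℚ)+2)^3) := by
  by_cases h : 2*k < n
  · rw [fT_zero_right n k h, fT_zero_right (n+1) k (by omega), fT_zero_right (n+2) k (by omega),
      fT_zero_right (n+2) (k+1) (by omega)]
    ring
  obtain ⟨j, hj⟩ : ∃ j, n + 2 = k + j := ⟨n+2-k, by omega⟩
  obtain ⟨l, hl⟩ : ∃ l, 2*k = n + l := ⟨2*k-n, by omega⟩
  set b : ℚ := ((2*k).factorial : ℚ) / (k.factorial * j.factorial * l.factorial) with hb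
  have hjq : (j:ℚ) = n + 2 - k := by
    have : ((n+2:ℕ):ℚ) = ((k+j:ℕ):ℚ) := by rw [hj]
    push_cast at this; linarith
  have hlq : (l:ℚ) = 2*k - n := by
    have : ((2*k:ℕ):ℚ) = ((n+l:ℕ):ℚ) := by rw [hl]
    push_cast at this; linarith
  have e2 : fT (n+2) k = b * l * (l-1) := by
    rcases l with _ | _ | l
    · rw [fT_zero_right _ _ (by omega)]; simp
    · rw [fT_zero_right _ _ (by omega)]; simp
    · rw [fT_mul _ _ (by omega) (by omega), hb, show n+2-k = j by omega, show 2*k-(n+2) = l by omega,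
        show (l+1+1).factorial = (l+2)*((l+1)*l.factorial) from rfl]
      push_cast
      field_simp
      ring
  have e1 : fT (n+1) k = b * j * l := by
    rcases l with _ | l
    · rw [fT_zero_right _ _ (by omega)]; simp
    rcases j with _ | j
    · rw [fT_zero_left _ _ (by omega)]; simp
    rw [fT_mul _ _ (by omega) (by omega), hb, show n+1-k = j by omega, show 2*k-(n+1) = l by omega,
      Nat.factorial_succ l, Nat.factorial_succ j]
    push_cast
    field_simp
  have e0 : fT n k = b * j * (j-1) := by
    rcases j with _ | _ | j
    · rw [fT_zero_left _ _ (by omega)]; simp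
    · rw [fT_zero_left _ _ (by omega)]; simp
    rw [fT_mul _ _ (by omega) (by omega), hb, show n-k = j by omega, show 2*k-n = l by omega,
      show (j+1+1).factorial = (j+2)*((j+1)*j.factorial) from rfl]
    push_cast
    field_simp
    ring
  have e3 : fT (n+2) (k+1) = b * (2*(2*k+1)) * j := by
    rcases j with _ | j
    · rw [fT_zero_left _ _ (by omega)]; simp
    rw [fT_mul _ _ (by omega) (by omega), hb, show n+2-(k+1) = j by omega, show 2*(k+1)-(n+2) = l by omega,
      show (2*(k+1)) = 2*k+1+1 by ring, Nat.factorial_succ, Nat.factorial_succ, Nat.factorial_succ k,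
      Nat.factorial_succ j]
    push_cast
    field_simp
    ring
  rw [e0, e1, e2, e3, hjq, hlq]
  ring

lemma seqT_eq (n N : ℕ) (h : n < N) : seqT n = ∑ k ∈ Finset.range N, fT n k ^2 := by
  unfold seqT
  have : ∀ k, (n.choose k : ℚ)^2 * ((2*k).choose n : ℚ)^2 = fT n k^2 := by
    intro k; unfold fT; ring
  simp_rw [this]
  apply Finset.sum_subset
  · intro x; simp; omega
  · intro x _ hx
    rw [fT_zero_left _ _ (by simpa using hx)]; ring

lemma seqT_rec (n : ℕ) :
    ((n:ℚ)+2)^3 * seqT (n+2) = (2*(n:ℚ)+3)*(12*((n:ℚ)+1)^2+12*((n:ℚ)+1)+4) * seqT (n+1)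
      - 16*((n:ℚ)+1)^3 * seqT n := by
  have h := Finset.sum_congr rfl (fun k (hk : k ∈ Finset.range (n+3)) =>
    fT_cert n k (by simp at hk; omega))
  have tel := Finset.sum_range_sub (fun k : ℕ => fT (n+2) k^2 * (4*(2*(n:ℚ)+3)*((n:ℚ)+2-k)^2 - ((n:ℚ)+2)^3)) (n+3)
  rw [fT_zero_left (n+2) (n+3) (by omega), fT_zero_right (n+2) 0 (by omega)] at tel
  have h2 : ∑ k ∈ Finset.range (n+3), (fT (n+2) (k+1)^2 * (4*(2*(n:ℚ)+3)*((n:ℚ)+1-k)^2 - ((n:ℚ)+2)^3)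
      - fT (n+2) k^2 * (4*(2*(n:ℚ)+3)*((n:ℚ)+2-k)^2 - ((n:ℚ)+2)^3)) = 0 := by
    rw [show (0:ℚ) = 0 - 0 by ring]
    refine Eq.trans (Finset.sum_congr rfl fun k _ => ?_) (tel.trans (by ring))
    push_cast
    ring
  rw [h2] at h
  rw [Finset.sum_add_distrib, Finset.sum_sub_distrib, ← Finset.mul_sum, ← Finset.mul_sum, ← Finset.mul_sum,
    ← seqT_eq (n+2) _ (by omega), ← seqT_eq (n+1) _ (by omega), ← seqT_eq n _ (by omega)] at h
  linarith

/-- the second summand, divided by `4^n` -/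
def rT (n k : ℕ) : ℚ := ((n+2*k).choose (4*k) : ℚ) * ((4*k).choose (2*k) : ℚ) * ((2*k).choose k : ℚ)^2 / 16^k

lemma rT_zero (n k : ℕ) (h : n < 2*k) : rT n k = 0 := by
  unfold rT; rw [Nat.choose_eq_zero_of_lt (by omega)]; simp

lemma rT_fact (n k : ℕ) (h : 2*k ≤ n) :
    rT n k = ((n+2*k).factorial : ℚ) / ((n-2*k).factorial * k.factorial^4 * 16^k) := by
  unfold rT
  rw [Nat.cast_choose ℚ (show 4*k ≤ n+2*k by omega), Nat.cast_choose ℚ (show 2*k ≤ 4*k by omega),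
    Nat.cast_choose ℚ (show k ≤ 2*k by omega), show n+2*k-4*k = n-2*k by omega,
    show 4*k-2*k = 2*k by omega, show 2*k-k = k by omega]
  have := Nat.factorial_ne_zero (4*k)
  have := Nat.factorial_ne_zero (2*k)
  field_simp

/-- telescoping partner -/
def gT (n k : ℕ) : ℚ := if 2*k ≤ n+2 then ((n+2*k).factorial : ℚ) / ((n+2-2*k).factorial * k.factorial^4 * 16^k)
  * (16*k^4) * (-2*(2*n+3)) else 0

lemma rT_cert (n k : ℕ) :
    ((n:ℚ)+2)^3 * rT (n+2) k - (2*(n:ℚ)+3)*(3*((n:ℚ)+1)^2+3*((n:ℚ)+1)+1) * rT (n+1) k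
      + ((n:ℚ)+1)^3 * rT n k = gT n (k+1) - gT n k := by
  by_cases h : n + 2 < 2*k
  · rw [rT_zero _ _ h, rT_zero _ _ (by omega), rT_zero _ _ (by omega)]
    unfold gT
    rw [if_neg (by omega), if_neg (by omega)]; ring
  obtain ⟨l, hl⟩ : ∃ l, n + 2 = 2*k + l := ⟨n+2-2*k, by omega⟩
  have hlq : (l:ℚ) = n + 2 - 2*k := by
    have : ((n+2:ℕ):ℚ) = ((2*k+l:ℕ):ℚ) := by rw [hl]
    push_cast at this; linarith
  set b : ℚ := ((n+2*k).factorial : ℚ) / (l.factorial * k.factorial^4 * 16^k) with hb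
  have e2 : rT (n+2) k = b * (n+2*k+1)*(n+2*k+2) := by
    rw [rT_fact _ _ (by omega), hb, show n+2+2*k = n+2*k+1+1 by ring, Nat.factorial_succ, Nat.factorial_succ,
      show n+2-2*k = l by omega]
    push_cast
    field_simp
    ring
  have e1 : rT (n+1) k = b * (n+2*k+1)*l := by
    rcases l with _ | l
    · rw [rT_zero _ _ (by omega)]; simp
    rw [rT_fact _ _ (by omega), hb, show n+1+2*k = n+2*k+1 by ring, Nat.factorial_succ, 
      show n+1-2*k = l by omega, Nat.factorial_succ l]
    push_cast
    field_simp
  have e0 : rT n k = b * l*(l-1) := by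
    rcases l with _ | _ | l
    · rw [rT_zero _ _ (by omega)]; simp
    · rw [rT_zero _ _ (by omega)]; simp
    rw [rT_fact _ _ (by omega), hb, 
      show n-2*k = l by omega, show (l+1+1).factorial = (l+2)*((l+1)*l.factorial) from rfl]
    push_cast
    field_simp
    ring
  have e3 : gT n k = b * (16*k^4) * (-2*(2*n+3)) := by
    unfold gT
    rw [if_pos (by omega), hb, show n+2-2*k = l by omega]
  have e4 : gT n (k+1) = b * (n+2*k+1)*(n+2*k+2) * l * (l-1) * (-2*(2*n+3)) := by
    unfold gT
    rcases l with _ | _ | l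
    · rw [if_neg (by omega)]; simp
    · rw [if_neg (by omega)]; simp
    rw [if_pos (by omega), hb, show n+2-2*(k+1) = l by omega, show n+2*(k+1) = n+2*k+1+1 by ring,
      Nat.factorial_succ, Nat.factorial_succ, Nat.factorial_succ k, show (l+1+1).factorial = (l+2)*((l+1)*l.factorial) from rfl]
    push_cast
    field_simp
    ring
  rw [e0, e1, e2, e3, e4, hlq]
  ring

def tT (n : ℕ) : ℚ := ∑ k ∈ Finset.range (n+1), rT n k

lemma tT_eq (n N : ℕ) (h : n < 2*N) : tT n = ∑ k ∈ Finset.range N, rT n k := by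
  unfold tT
  rcases le_total N (n+1) with h' | h'
  · symm
    apply Finset.sum_subset
    · intro x; simp; omega
    · intro x _ hx
      rw [rT_zero]; simp at hx; omega
  · apply Finset.sum_subset
    · intro x; simp; omega
    · intro x _ hx
      rw [rT_zero]; simp at hx; omega

lemma tT_rec (n : ℕ) :
    ((n:ℚ)+2)^3 * tT (n+2) = (2*(n:ℚ)+3)*(3*((n:ℚ)+1)^2+3*((n:ℚ)+1)+1) * tT (n+1)
      - ((n:ℚ)+1)^3 * tT n := by
  have h := Finset.sum_congr rfl (fun k (_ : k ∈ Finset.range (n+3)) => rT_cert n k)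
  rw [Finset.sum_range_sub (fun k => gT n k)] at h
  have g0 : gT n 0 = 0 := by simp [gT]
  have g1 : gT n (n+3) = 0 := by unfold gT; rw [if_neg (by omega)]
  rw [g0, g1, Finset.sum_add_distrib, Finset.sum_sub_distrib, ← Finset.mul_sum, ← Finset.mul_sum, ← Finset.mul_sum,
    ← tT_eq (n+2) _ (by omega), ← tT_eq (n+1) _ (by omega), ← tT_eq n _ (by omega)] at h
  linarith

lemma seqT_div (n : ℕ) : seqT n = 4^n * tT n := by
  induction n using Nat.twoStepInduction with
  | zero => simp [seqT, tT, rT]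
  | one => norm_num [seqT, tT, rT, Finset.sum_range_succ, Nat.choose]
  | more n h0 h1 =>
    have a := seqT_rec n
    have b := tT_rec n
    rw [h0, h1] at a
    have hn : ((n:ℚ)+2)^3 ≠ 0 := by positivity
    apply mul_left_cancel₀ hn
    rw [a]
    rw [pow_succ, pow_succ]
    linear_combination (-16*4^n) * b

end S17

namespace S17

/-! ### Part B : summation over `n` -/

lemma choose_rel (N k : ℕ) : (((N+2*k).choose (4*k+1) : ℕ) : ℚ) * (4*k+1) = ((N+2*k).choose (4*k) : ℚ) * ((N:ℚ) - 2*k) := by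
  by_cases h : N < 2*k
  · rw [Nat.choose_eq_zero_of_lt (by omega), Nat.choose_eq_zero_of_lt (by omega)]; simp
  have := Nat.choose_succ_right_eq (N+2*k) (4*k)
  have h2 : N + 2*k - 4*k = N - 2*k := by omega
  rw [h2] at this
  have h3 : (((N - 2*k : ℕ)) : ℚ) = (N:ℚ) - 2*k := by
    rw [Nat.cast_sub (by omega)]; push_cast; ring
  rw [← h3]
  exact_mod_cast this

lemma choose_pascal (N k : ℕ) : (((N+1+2*k).choose (4*k+1) : ℕ) : ℚ) = ((N+2*k).choose (4*k) : ℚ) + ((N+2*k).choose (4*k+1) : ℚ) := by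
  rw [show N+1+2*k = (N+2*k)+1 by ring, Nat.choose_succ_succ]; push_cast; ring

lemma choose_base (k : ℕ) : (((0+2*k).choose (4*k+1) : ℕ) : ℚ) = 0 := by
  rw [Nat.choose_eq_zero_of_lt (by omega)]; simp

lemma sum0 (N k : ℕ) : ∑ n ∈ Finset.range N, (((n+2*k).choose (4*k) : ℕ) : ℚ) = ((N+2*k).choose (4*k+1) : ℚ) := by
  induction N with
  | zero => rw [choose_base]; simp
  | succ N ih => rw [Finset.sum_range_succ, ih, choose_pascal]; ring

lemma sum1 (N k : ℕ) : (2*k+1) * ∑ n ∈ Finset.range N, (2*(n:ℚ)+1) * (((n+2*k).choose (4*k) : ℕ) : ℚ)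
    = N*(4*k+1)*((N+2*k).choose (4*k+1) : ℚ) := by
  induction N with
  | zero => simp
  | succ N ih =>
    rw [Finset.sum_range_succ, mul_add, ih, choose_pascal]; push_cast
    have := choose_rel N k
    linear_combination (-1) * this

lemma sum2 (N k : ℕ) : (4*k+3) * ∑ n ∈ Finset.range N, ((n:ℚ)*(n+1)) * (((n+2*k).choose (4*k) : ℕ) : ℚ)
    = (2*k*(2*k+1)*(4*k+3) + ((N:ℚ)^2-(2*k+1)^2)*(4*k+1)) *((N+2*k).choose (4*k+1) : ℚ) := by
  induction N with
  | zero => rw [choose_base]; simp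
  | succ N ih =>
    rw [Finset.sum_range_succ, mul_add, ih, choose_pascal]; push_cast
    have := choose_rel N k
    linear_combination (-(2*(N:ℚ)+1)) * this

lemma sum3 (N k : ℕ) : (2*k+2) * ∑ n ∈ Finset.range N, ((2*(n:ℚ)+1)*(n*(n+1))) * (((n+2*k).choose (4*k) : ℕ) : ℚ)
    = N*(4*k+1)*(2*k*(2*k+2) + ((N:ℚ)^2-(2*k+1)^2)) *((N+2*k).choose (4*k+1) : ℚ) := by
  induction N with
  | zero => simp
  | succ N ih =>
    rw [Finset.sum_range_succ, mul_add, ih, choose_pascal]; push_cast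
    have := choose_rel N k
    linear_combination (-(3*(N:ℚ)^2+3*N)) * this

/-! ### Part C : Legendre partial fractions -/

def Lk (m k : ℕ) : ℚ := (-1)^k * (m.choose k : ℚ) * ((m+k).choose k : ℚ)

def Ek (m k : ℕ) : ℚ := (-1)^k * ((m+1).choose k : ℚ) * ((m+k).choose k : ℚ)

lemma Lk_Ek (m k : ℕ) (hk : k ≤ m+1) : Lk m k * (m+1) = Ek m k * (m+1-k) := by
  unfold Lk Ek
  have := Nat.choose_mul_succ_eq m k
  have h : ((m.choose k : ℕ):ℚ) * (m+1) = ((m+1).choose k : ℕ) * (m+1-k) := by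
    have h2 : ((m+1-k : ℕ):ℚ) = (m:ℚ)+1-k := by rw [Nat.cast_sub hk]; push_cast; ring
    rw [← h2]; exact_mod_cast this
  linear_combination ((-1)^k * ((m+k).choose k : ℚ)) * h

lemma Lk_Ek' (m k : ℕ) : Lk (m+1) k * (m+1) = Ek m k * (m+1+k) := by
  unfold Lk Ek
  have := Nat.choose_mul_succ_eq (m+k) k
  have h : (((m+1+k).choose k : ℕ):ℚ) * (m+1) = ((m+k).choose k : ℕ) * (m+1+k) := by
    rw [show m+k+1-k = m+1 by omega, show m+k+1 = m+1+k by ring] at this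
    exact_mod_cast this.symm
  linear_combination ((-1)^k * ((m+1).choose k : ℚ)) * h

lemma Ek_succ (m k : ℕ) (hk : k ≤ m+1) : Ek m (k+1) * (k+1)^2 = - Ek m k * (m+1-k) * (m+k+1) := by
  unfold Ek
  have h1 := Nat.choose_succ_right_eq (m+1) k
  have h2 : (((m+1).choose (k+1) : ℕ):ℚ) * (k+1) = ((m+1).choose k : ℕ) * (m+1-k) := by
    have h2 : ((m+1-k : ℕ):ℚ) = (m:ℚ)+1-k := by rw [Nat.cast_sub hk]; push_cast; ring
    rw [← h2]; exact_mod_cast h1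
  have h3 := Nat.add_one_mul_choose_eq (m+k) k
  have h4 : (((m+(k+1)).choose (k+1) : ℕ):ℚ) * (k+1) = (m+k+1) * ((m+k).choose k : ℕ) := by
    rw [show m+(k+1) = m+k+1 by ring]
    exact_mod_cast h3.symm
  rw [pow_succ]
  linear_combination (-(-1)^k * ((m+(k+1)).choose (k+1) : ℚ) * (k+1)) * h2 - ((-1)^k * ((m+1).choose k : ℕ) * (m+1-k)) * h4

lemma sum_Ek (m : ℕ) : ∑ k ∈ Finset.range (m+2), Ek m k = 0 := by
  have h : ∀ k ∈ Finset.range (m+2), Ek m k * ((m:ℚ)+1)^2 = (-(((k+1 : ℕ):ℚ)^2 * Ek m (k+1))) - (-((k:ℚ)^2 * Ek m k)) := by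
    intro k hk
    have := Ek_succ m k (by simp at hk; omega)
    push_cast
    linear_combination this
  have h2 := Finset.sum_congr rfl h
  rw [← Finset.sum_mul, Finset.sum_range_sub (fun k : ℕ => -((k:ℚ)^2 * Ek m k))] at h2
  have h3 : Ek m (m+2) = 0 := by unfold Ek; rw [Nat.choose_eq_zero_of_lt (by omega)]; simp
  rw [h3] at h2
  have h4 : ((m:ℚ)+1)^2 ≠ 0 := by positivity
  simpa [h4] using h2

lemma Lk_zero (m k : ℕ) (h : m < k) : Lk m k = 0 := by
  unfold Lk; rw [Nat.choose_eq_zero_of_lt h]; simp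

/-- `Σ L_k/(x+k) = ∏_{j=1}^m (j-x) / ∏_{j=0}^m (x+j)`. -/
lemma legendre (m : ℕ) (x : ℚ) (hx : 0 < x) :
    ∑ k ∈ Finset.range (m+1), Lk m k / (x+k) =
     (∏ j ∈ Finset.range m, ((j:ℚ)+1-x)) / ∏ j ∈ Finset.range (m+1), (x+j) := by
  induction m with
  | zero => simp [Lk]
  | succ m ih =>
    have e : ∑ k ∈ Finset.range (m+1), Lk m k / (x+k) = ∑ k ∈ Finset.range (m+2), Lk m k / (x+k) := by
      rw [Finset.sum_range_succ _ (m+1), Lk_zero _ _ (by omega)]; simp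
    have h : ∀ k ∈ Finset.range (m+2), Lk (m+1) k / (x+k) * (x+m+1) - Lk m k / (x+k) * (m+1-x) = 2 * Ek m k := by
      intro k hk
      have h1 := Lk_Ek m k (by simp at hk; omega)
      have h2 := Lk_Ek' m k
      have hm : (m:ℚ)+1 ≠ 0 := by positivity
      have hxk : x + k ≠ 0 := by positivity
      rw [← eq_div_iff hm] at h1 h2
      rw [h1, h2]
      field_simp
      ring
    have h2 := Finset.sum_congr rfl h
    rw [Finset.sum_sub_distrib, ← Finset.sum_mul, ← Finset.sum_mul, ← Finset.mul_sum, sum_Ek, ← e, ih] at h2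
    rw [Finset.prod_range_succ _ m, Finset.prod_range_succ _ (m+1)]
    have hp : (∏ j ∈ Finset.range (m+1), (x+j)) ≠ 0 := by
      apply Finset.prod_ne_zero_iff.mpr; intro j _; positivity
    have hxm : x + ((m+1 : ℕ):ℚ) ≠ 0 := by positivity
    push_cast at *
    field_simp at *
    linear_combination h2

end S17

namespace S17

/-! ### Part D : reduction to sums over `k` -/

def Dk (m k : ℕ) : ℚ := Lk m k * ∏ i ∈ Finset.range k, (1 - (2*(m:ℚ)+1)^2/(4*((i:ℚ)+1)^2))

lemma Lk_succ (m k : ℕ) (hk : k ≤ m) : Lk m (k+1) * (k+1)^2 = - Lk m k * (m-k) * (m+k+1) := by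
  unfold Lk
  have h1 := Nat.choose_succ_right_eq m k
  have h2 : ((m.choose (k+1) : ℕ):ℚ) * (k+1) = (m.choose k : ℕ) * (m-k) := by
    have h2 : ((m-k : ℕ):ℚ) = (m:ℚ)-k := by rw [Nat.cast_sub hk]
    rw [← h2]; exact_mod_cast h1
  have h3 := Nat.add_one_mul_choose_eq (m+k) k
  have h4 : (((m+(k+1)).choose (k+1) : ℕ):ℚ) * (k+1) = (m+k+1) * ((m+k).choose k : ℕ) := by
    rw [show m+(k+1) = m+k+1 by ring]
    exact_mod_cast h3.symm
  rw [pow_succ]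
  linear_combination (-(-1)^k * ((m+(k+1)).choose (k+1) : ℚ) * (k+1)) * h2 - ((-1)^k * (m.choose k : ℕ) * (m-k)) * h4

def wk (m k : ℕ) : ℚ := ((2*m+1+2*k).factorial : ℚ) / ((2*(m-k)).factorial * k.factorial^4 * 16^k)

lemma wk_eq (m k : ℕ) (hk : k ≤ m) :
    ((2*m+1+2*k).choose (4*k+1) : ℚ) * (((4*k).choose (2*k) : ℚ) * ((2*k).choose k : ℚ)^2 / 16^k) * (4*k+1) = wk m k := by
  unfold wk
  rw [Nat.cast_choose ℚ (show 4*k+1 ≤ 2*m+1+2*k by omega), Nat.cast_choose ℚ (show 2*k ≤ 4*k by omega),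
    Nat.cast_choose ℚ (show k ≤ 2*k by omega), show 2*m+1+2*k-(4*k+1) = 2*(m-k) by omega,
    show 4*k-2*k = 2*k by omega, show 2*k-k = k by omega, Nat.factorial_succ (4*k)]
  have := Nat.factorial_ne_zero (4*k)
  have := Nat.factorial_ne_zero (2*k)
  have : (4*(k:ℚ)+1) ≠ 0 := by positivity
  push_cast
  field_simp

lemma wk_Dk (m k : ℕ) (hk : k ≤ m) : wk m k = (2*m+1) * Dk m k := by
  induction k with
  | zero =>
    simp [wk, Dk, Lk]
    rw [Nat.factorial_succ]; push_cast; field_simp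
  | succ k ih =>
    have ih := ih (by omega)
    have h1 : wk m (k+1) * (16 * (k+1)^4) = wk m k * ((2*m+2*k+2)*(2*m+2*k+3)*(2*(m-k))*(2*(m-k)-1)) := by
      obtain ⟨l, rfl⟩ : ∃ l, m = k+1+l := ⟨m-(k+1), by omega⟩
      unfold wk
      rw [show k+1+l-(k+1) = l by omega, show k+1+l-k = l+1 by omega, show 2*(l+1) = 2*l+1+1 by ring,
        show 2*(k+1+l)+1+2*(k+1) = (2*(k+1+l)+1+2*k)+1+1 by ring, Nat.factorial_succ, Nat.factorial_succ,
        Nat.factorial_succ k, Nat.factorial_succ (2*l+1), Nat.factorial_succ (2*l)]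
      push_cast
      field_simp
      ring
    have h2 := Lk_succ m k (by omega)
    have h3 : Dk m (k+1) * (16*(k+1)^4) = Dk m k * ((2*m+2*k+2)*(2*m+2*k+3)*(2*(m-k))*(2*(m-k)-1)) := by
      unfold Dk
      rw [Finset.prod_range_succ]
      have hk1 : ((k:ℚ)+1) ≠ 0 := by positivity
      rw [← eq_div_iff (pow_ne_zero _ hk1)] at h2
      rw [h2]
      field_simp
      ring
    have hk1 : (16*((k:ℚ)+1)^4) ≠ 0 := by positivity
    apply mul_right_cancel₀ hk1
    rw [h1, ih]
    linear_combination (-(2*(m:ℚ)+1)) * h3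

def X1 (m : ℕ) : ℚ := ∑ k ∈ Finset.range (m+1), Dk m k / (4*k+1)
def X3 (m : ℕ) : ℚ := ∑ k ∈ Finset.range (m+1), Dk m k / (4*k+3)
def X2 (m : ℕ) : ℚ := ∑ k ∈ Finset.range (m+1), Dk m k / (2*k+1)
def X4 (m : ℕ) : ℚ := ∑ k ∈ Finset.range (m+1), Dk m k / (2*k+2)

lemma sum_swap (m : ℕ) (q : ℕ → ℚ) :
    ∑ n ∈ Finset.range (2*m+1), q n * seqT n / 4^n =
    ∑ k ∈ Finset.range (m+1), (∑ n ∈ Finset.range (2*m+1), q n * ((n+2*k).choose (4*k) : ℚ))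
      * (((4*k).choose (2*k) : ℚ) * ((2*k).choose k : ℚ)^2 / 16^k) := by
  simp_rw [Finset.sum_mul]
  rw [Finset.sum_comm]
  apply Finset.sum_congr rfl
  intro n hn
  rw [seqT_div, tT_eq n (m+1) (by simp at hn; omega)]
  have : (4:ℚ)^n ≠ 0 := by positivity
  rw [mul_left_comm, mul_div_cancel_left₀ _ this, Finset.mul_sum]
  apply Finset.sum_congr rfl
  intro k _
  unfold rT
  ring

lemma S2_eq (m : ℕ) : ∑ n ∈ Finset.range (2*m+1), (n:ℚ)^2 * seqT n / 4^n =
    (2*m+1)/4 * X1 m - (2*m+1)/4 * X3 m + (2*m+1)^3 * X3 m - (2*m+1)^2/2 * X2 m := by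
  rw [sum_swap m (fun n => (n:ℚ)^2)]
  unfold X1 X2 X3
  rw [Finset.mul_sum, Finset.mul_sum, Finset.mul_sum, Finset.mul_sum, ← Finset.sum_sub_distrib, ← Finset.sum_add_distrib,
    ← Finset.sum_sub_distrib]
  apply Finset.sum_congr rfl
  intro k hk
  have hw := wk_eq m k (by simp at hk; omega)
  rw [wk_Dk m k (by simp at hk; omega)] at hw
  have a0 := sum0 (2*m+1) k
  have a1 := sum1 (2*m+1) k
  have a2 := sum2 (2*m+1) k
  have e : ∑ n ∈ Finset.range (2*m+1), (n:ℚ)^2 * ((n+2*k).choose (4*k) : ℚ) =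
     ∑ n ∈ Finset.range (2*m+1), ((n:ℚ)*(n+1)) * (((n+2*k).choose (4*k) : ℕ) : ℚ)
     - 1/2 * ∑ n ∈ Finset.range (2*m+1), (2*(n:ℚ)+1) * (((n+2*k).choose (4*k) : ℕ) : ℚ)
     + 1/2 * ∑ n ∈ Finset.range (2*m+1), (((n+2*k).choose (4*k) : ℕ) : ℚ) := by
    rw [Finset.mul_sum, Finset.mul_sum, ← Finset.sum_sub_distrib, ← Finset.sum_add_distrib]
    apply Finset.sum_congr rfl
    intro n _; ring
  have h1 : (4*(k:ℚ)+1) ≠ 0 := by positivity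
  have h2 : (2*(k:ℚ)+1) ≠ 0 := by positivity
  have h3 : (4*(k:ℚ)+3) ≠ 0 := by positivity
  rw [mul_comm, ← eq_div_iff h2] at a1
  rw [mul_comm, ← eq_div_iff h3] at a2
  rw [mul_assoc, mul_comm, mul_assoc] at hw
  rw [e, a0, a1, a2]
  have hw' : ((2*m+1+2*k).choose (4*k+1) : ℚ) * (((4*k).choose (2*k) : ℚ) * ((2*k).choose k : ℚ)^2 / 16^k) = 
    (2*m+1) * Dk m k / (4*k+1) := by
    rw [eq_div_iff h1, ← hw]; ring
  generalize (((4*k).choose (2*k) : ℚ) * ((2*k).choose k : ℚ)^2 / 16^k) = w at *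
  generalize ((2*m+1+2*k).choose (4*k+1) : ℚ) = c at *
  generalize Dk m k = d at *
  push_cast
  calc _ = (c*w) * ((2*k*(2*k+1)*(4*k+3) + ((2*(m:ℚ)+1)^2-(2*k+1)^2)*(4*k+1))/(4*k+3) - 1/2 * ((2*m+1)*(4*k+1)/(2*k+1)) + 1/2) := by
        field_simp
    _ = _ := by
        rw [hw']
        field_simp
        ring

lemma S3_eq (m : ℕ) : ∑ n ∈ Finset.range (2*m+1), (n:ℚ)^3 * seqT n / 4^n =
    1/2 * ((2*m+1)^4 * X4 m - (2*m+1)^2 * X4 m + 3/4*(2*m+1)*X1 m + 3/4*(2*m+1)*X3 m - 3*(2*m+1)^3 * X3 m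
      + (2*m+1)^2*X2 m - (2*m+1)*X1 m) := by
  rw [sum_swap m (fun n => (n:ℚ)^3)]
  unfold X1 X2 X3 X4
  simp only [Finset.mul_sum, ← Finset.sum_sub_distrib, ← Finset.sum_add_distrib]
  apply Finset.sum_congr rfl
  intro k hk
  have hw := wk_eq m k (by simp at hk; omega)
  rw [wk_Dk m k (by simp at hk; omega)] at hw
  have a0 := sum0 (2*m+1) k
  have a1 := sum1 (2*m+1) k
  have a2 := sum2 (2*m+1) k
  have a3 := sum3 (2*m+1) k
  have e : ∑ n ∈ Finset.range (2*m+1), (n:ℚ)^3 * ((n+2*k).choose (4*k) : ℚ) =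
     1/2 * ∑ n ∈ Finset.range (2*m+1), ((2*(n:ℚ)+1)*(n*(n+1))) * (((n+2*k).choose (4*k) : ℕ) : ℚ)
     - 3/2 * ∑ n ∈ Finset.range (2*m+1), ((n:ℚ)*(n+1)) * (((n+2*k).choose (4*k) : ℕ) : ℚ)
     + 1/2 * ∑ n ∈ Finset.range (2*m+1), (2*(n:ℚ)+1) * (((n+2*k).choose (4*k) : ℕ) : ℚ)
     - 1/2 * ∑ n ∈ Finset.range (2*m+1), (((n+2*k).choose (4*k) : ℕ) : ℚ) := by
    simp only [Finset.mul_sum, ← Finset.sum_sub_distrib, ← Finset.sum_add_distrib]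
    apply Finset.sum_congr rfl
    intro n _; ring
  have h1 : (4*(k:ℚ)+1) ≠ 0 := by positivity
  have h2 : (2*(k:ℚ)+1) ≠ 0 := by positivity
  have h3 : (4*(k:ℚ)+3) ≠ 0 := by positivity
  have h4 : (2*(k:ℚ)+2) ≠ 0 := by positivity
  rw [mul_comm, ← eq_div_iff h2] at a1
  rw [mul_comm, ← eq_div_iff h3] at a2
  rw [mul_comm, ← eq_div_iff h4] at a3
  rw [mul_assoc, mul_comm, mul_assoc] at hw
  rw [e, a0, a1, a2, a3]
  have hw' : ((2*m+1+2*k).choose (4*k+1) : ℚ) * (((4*k).choose (2*k) : ℚ) * ((2*k).choose k : ℚ)^2 / 16^k) = 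
    (2*m+1) * Dk m k / (4*k+1) := by
    rw [eq_div_iff h1, ← hw]; ring
  generalize (((4*k).choose (2*k) : ℚ) * ((2*k).choose k : ℚ)^2 / 16^k) = w at *
  generalize ((2*m+1+2*k).choose (4*k+1) : ℚ) = c at *
  generalize Dk m k = d at *
  push_cast
  calc _ = (c*w) * (1/2 * ((2*m+1)*(4*k+1)*(2*k*(2*k+2)+((2*(m:ℚ)+1)^2-(2*k+1)^2))/(2*k+2))
       - 3/2*((2*k*(2*k+1)*(4*k+3) + ((2*(m:ℚ)+1)^2-(2*k+1)^2)*(4*k+1))/(4*k+3)) + 1/2 * ((2*m+1)*(4*k+1)/(2*k+1)) - 1/2) := by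
        field_simp
    _ = _ := by
        rw [hw']
        field_simp
        ring

end S17

namespace S17

/-! ### Part E : p-adic divisibility of rationals -/

def M (p r : ℕ) (a : ℚ) : Prop := ∃ n d : ℤ, ¬ (p:ℤ) ∣ d ∧ a * d = p^r * n

section
variable {p : ℕ} (hp : p.Prime)
include hp

lemma M_add {r : ℕ} {a b : ℚ} (ha : M p r a) (hb : M p r b) : M p r (a+b) := by
  obtain ⟨n, d, hd, h⟩ := ha
  obtain ⟨n', d', hd', h'⟩ := hb
  refine ⟨n*d'+n'*d, d*d', ?_, ?_⟩
  · intro hh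
    rcases (Nat.prime_iff_prime_int.mp hp).dvd_or_dvd hh with h | h
    exacts [hd h, hd' h]
  · push_cast
    linear_combination (d':ℚ)*h + (d:ℚ)*h'

lemma M_mul {r s : ℕ} {a b : ℚ} (ha : M p r a) (hb : M p s b) : M p (r+s) (a*b) := by
  obtain ⟨n, d, hd, h⟩ := ha
  obtain ⟨n', d', hd', h'⟩ := hb
  refine ⟨n*n', d*d', ?_, ?_⟩
  · intro hh
    rcases (Nat.prime_iff_prime_int.mp hp).dvd_or_dvd hh with h | h
    exacts [hd h, hd' h]
  · push_cast
    rw [pow_add]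
    linear_combination (b*d')*h + ((p:ℚ)^r*n)*h'

lemma M_int' (r : ℕ) (z : ℤ) (h : (p:ℤ)^r ∣ z) : M p r z := by
  obtain ⟨n, rfl⟩ := h
  refine ⟨n, 1, ?_, by push_cast; ring⟩
  intro h
  exact hp.one_lt.ne' (by exact_mod_cast Int.eq_one_of_dvd_one (by positivity) h)

lemma M_int (z : ℤ) : M p 0 (z:ℚ) := M_int' hp 0 z (by simp)
lemma M_nat (z : ℕ) : M p 0 (z:ℚ) := by exact_mod_cast M_int hp z

lemma M_p (r : ℕ) : M p r ((p:ℚ)^r) := by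
  exact_mod_cast M_int' hp r ((p:ℤ)^r) dvd_rfl

lemma M_zero (r : ℕ) : M p r 0 := by exact_mod_cast M_int' hp r 0 (by simp)

lemma M_inv (d : ℤ) (hd : ¬ (p:ℤ) ∣ d) : M p 0 (1/(d:ℚ)) := by
  refine ⟨1, d, hd, ?_⟩
  have : (d:ℚ) ≠ 0 := by
    intro h
    apply hd
    have : d = 0 := by exact_mod_cast h
    simp [this]
  field_simp
  simp

lemma M_neg {r : ℕ} {a : ℚ} (ha : M p r a) : M p r (-a) := by
  have := M_mul hp (M_int hp (-1)) ha
  simpa using this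

lemma M_sub {r : ℕ} {a b : ℚ} (ha : M p r a) (hb : M p r b) : M p r (a-b) := by
  rw [sub_eq_add_neg]; exact M_add hp ha (M_neg hp hb)

lemma M_mono {r s : ℕ} (h : r ≤ s) {a : ℚ} (ha : M p s a) : M p r a := by
  obtain ⟨n, d, hd, h'⟩ := ha
  refine ⟨n*p^(s-r), d, hd, ?_⟩
  rw [h']
  push_cast
  rw [mul_comm (n:ℚ), ← mul_assoc, ← pow_add]
  congr 3
  omega

lemma M_sum {r : ℕ} {ι : Type*} (s : Finset ι) (f : ι → ℚ) (h : ∀ i ∈ s, M p r (f i)) : M p r (∑ i ∈ s, f i) := by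
  classical
  induction s using Finset.induction_on with
  | empty => simpa using M_zero hp r
  | insert a s ha ih =>
    rw [Finset.sum_insert ha]
    exact M_add hp (h a (by simp)) (ih (fun i hi => h i (by simp [hi])))

lemma M_prod {ι : Type*} (s : Finset ι) (f : ι → ℚ) (h : ∀ i ∈ s, M p 0 (f i)) : M p 0 (∏ i ∈ s, f i) := by
  classical
  induction s using Finset.induction_on with
  | empty => simpa using M_nat hp 1
  | insert a s ha ih =>
    rw [Finset.prod_insert ha]
    exact M_mul hp (h a (by simp)) (ih (fun i hi => h i (by simp [hi])))

lemma M_num {r : ℕ} {a : ℚ} (ha : M p r a) : (p:ℤ)^r ∣ a.num := by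
  obtain ⟨n, d, hd, h⟩ := ha
  have h1 : a.num * d = p^r * (n * a.den) := by
    have h2 : (a.num : ℚ) = a * a.den := (Rat.mul_den_eq_num a).symm
    have : (a.num : ℚ) * d = p^r * (n * a.den) := by rw [h2]; linear_combination (a.den:ℚ) * h
    exact_mod_cast this
  have h3 : (p:ℤ)^r ∣ a.num * d := ⟨_, h1⟩
  exact IsCoprime.dvd_of_dvd_mul_right
    (IsCoprime.pow_left ((Nat.prime_iff_prime_int.mp hp).coprime_iff_not_dvd.mpr hd)) h3

lemma M_cancel {r : ℕ} {a : ℚ} (z : ℤ) (hz : ¬ (p:ℤ) ∣ z) (ha : M p r (a*z)) : M p r a := by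
  have h := M_mul hp ha (M_inv hp z hz)
  have : (z:ℚ) ≠ 0 := by
    intro h
    apply hz
    have : z = 0 := by exact_mod_cast h
    simp [this]
  rw [mul_one_div, mul_div_cancel_right₀ _ this] at h
  exact h

lemma M_dvd {r : ℕ} {z : ℤ} (h : M p r z) : (p:ℤ)^r ∣ z := by
  have := M_num hp h
  simpa using this

lemma M_div {r : ℕ} {a : ℚ} (z : ℤ) (hz : ¬ (p:ℤ) ∣ z) (ha : M p r a) : M p r (a/z) := by
  have h := M_mul hp ha (M_inv hp z hz)
  rw [mul_one_div] at h
  exact h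

/-- divide by the prime itself -/
lemma M_divp {r : ℕ} {a : ℚ} (ha : M p (r+1) a) : M p r (a/p) := by
  obtain ⟨n, d, hd, h⟩ := ha
  refine ⟨n, d, hd, ?_⟩
  have : (p:ℚ) ≠ 0 := by exact_mod_cast hp.ne_zero
  rw [div_mul_eq_mul_div, h, pow_succ]
  field_simp

end

lemma Lk_int (m k : ℕ) : ∃ z : ℤ, Lk m k = z :=
  ⟨(-1)^k * (m.choose k) * ((m+k).choose k), by unfold Lk; push_cast; ring⟩

lemma not_dvd_small {p : ℕ} (d : ℕ) (h0 : 0 < d) (h1 : d < p) : ¬ (p:ℤ) ∣ (d:ℤ) := by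
  intro h
  have := Nat.le_of_dvd h0 (by exact_mod_cast h)
  omega

section
variable {m : ℕ} (hp : (2*m+1).Prime)
include hp

lemma Lk_M (k : ℕ) : M (2*m+1) 0 (Lk m k) := by
  obtain ⟨z, hz⟩ := Lk_int m k
  rw [hz]; exact M_int hp z

lemma prod_M (k : ℕ) (hk : k ≤ m) : M (2*m+1) 2 ((∏ i ∈ Finset.range k, (1 - (2*(m:ℚ)+1)^2/(4*((i:ℚ)+1)^2))) - 1) := by
  induction k with
  | zero => simpa using M_zero hp 2
  | succ k ih =>
    have ih := ih (by omega)
    rw [Finset.prod_range_succ]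
    set P := ∏ i ∈ Finset.range k, (1 - (2*(m:ℚ)+1)^2/(4*((i:ℚ)+1)^2))
    have hP : M (2*m+1) 0 P := by
      have := M_add hp (M_mono hp (Nat.zero_le 2) ih) (M_nat hp 1)
      simpa using this
    have hd : ¬ ((2*m+1 : ℕ):ℤ) ∣ ((2*(k+1) : ℕ):ℤ) := not_dvd_small _ (by omega) (by omega)
    have h1 := M_div hp _ hd (M_div hp _ hd (M_p hp 2))
    have h2 := M_mul hp hP h1
    have h3 := M_sub hp ih h2
    convert h3 using 1
    push_cast
    field_simp
    ring

lemma Dk_sub_M (k : ℕ) (hk : k ≤ m) : M (2*m+1) 2 (Dk m k - Lk m k) := by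
  have := M_mul hp (Lk_M hp k) (prod_M hp k hk)
  convert this using 1
  unfold Dk
  ring

lemma Dk_M (k : ℕ) (hk : k ≤ m) : M (2*m+1) 0 (Dk m k) := by
  have := M_add hp (M_mono hp (Nat.zero_le 2) (Dk_sub_M hp k hk)) (Lk_M hp k)
  simpa using this

end

lemma YL1 (m : ℕ) : ∑ k ∈ Finset.range (m+1), Lk m k / (4*k+1) =
    (∏ j ∈ Finset.range m, (4*(j:ℚ)+3)) / ∏ j ∈ Finset.range (m+1), (4*(j:ℚ)+1) := by
  have h := legendre m (1/4) (by norm_num)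
  have h1 : ∏ j ∈ Finset.range m, ((j:ℚ)+1-1/4) = (∏ j ∈ Finset.range m, (4*(j:ℚ)+3)) * (1/4)^m := by
    rw [← Finset.card_range m, ← Finset.prod_const, Finset.card_range, ← Finset.prod_mul_distrib]
    apply Finset.prod_congr rfl; intro j _; ring
  have h2 : ∏ j ∈ Finset.range (m+1), (1/4 + (j:ℚ)) = (∏ j ∈ Finset.range (m+1), (4*(j:ℚ)+1)) * (1/4)^(m+1) := by
    rw [← Finset.card_range (m+1), ← Finset.prod_const, Finset.card_range, ← Finset.prod_mul_distrib]
    apply Finset.prod_congr rfl; intro j _; ring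
  have h3 : ∑ k ∈ Finset.range (m+1), Lk m k / (4*k+1) = 1/4 * ∑ k ∈ Finset.range (m+1), Lk m k / (1/4 + k) := by
    rw [Finset.mul_sum]; apply Finset.sum_congr rfl; intro k _
    have : (4*(k:ℚ)+1) ≠ 0 := by positivity
    have : (1/4+(k:ℚ)) ≠ 0 := by positivity
    field_simp
    ring
  have h4 : (∏ j ∈ Finset.range (m+1), (4*(j:ℚ)+1)) ≠ 0 := by
    apply Finset.prod_ne_zero_iff.mpr; intro j _; positivity
  rw [h3, h, h1, h2]
  field_simp
  ring

lemma YL3 (m : ℕ) : ∑ k ∈ Finset.range (m+1), Lk m k / (4*k+3) =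
    (∏ j ∈ Finset.range m, (4*(j:ℚ)+1)) / ∏ j ∈ Finset.range (m+1), (4*(j:ℚ)+3) := by
  have h := legendre m (3/4) (by norm_num)
  have h1 : ∏ j ∈ Finset.range m, ((j:ℚ)+1-3/4) = (∏ j ∈ Finset.range m, (4*(j:ℚ)+1)) * (1/4)^m := by
    rw [← Finset.card_range m, ← Finset.prod_const, Finset.card_range, ← Finset.prod_mul_distrib]
    apply Finset.prod_congr rfl; intro j _; ring
  have h2 : ∏ j ∈ Finset.range (m+1), (3/4 + (j:ℚ)) = (∏ j ∈ Finset.range (m+1), (4*(j:ℚ)+3)) * (1/4)^(m+1) := by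
    rw [← Finset.card_range (m+1), ← Finset.prod_const, Finset.card_range, ← Finset.prod_mul_distrib]
    apply Finset.prod_congr rfl; intro j _; ring
  have h3 : ∑ k ∈ Finset.range (m+1), Lk m k / (4*k+3) = 1/4 * ∑ k ∈ Finset.range (m+1), Lk m k / (3/4 + k) := by
    rw [Finset.mul_sum]; apply Finset.sum_congr rfl; intro k _
    have : (4*(k:ℚ)+3) ≠ 0 := by positivity
    have : (3/4+(k:ℚ)) ≠ 0 := by positivity
    field_simp
    ring
  have h4 : (∏ j ∈ Finset.range (m+1), (4*(j:ℚ)+3)) ≠ 0 := by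
    apply Finset.prod_ne_zero_iff.mpr; intro j _; positivity
  rw [h3, h, h1, h2]
  field_simp
  ring

lemma YL2 (m : ℕ) : ∑ k ∈ Finset.range (m+1), Lk m k / (2*k+1) = 1/(2*m+1) := by
  have h := legendre m (1/2) (by norm_num)
  have h1 : ∏ j ∈ Finset.range m, ((j:ℚ)+1-1/2) = ∏ j ∈ Finset.range m, (1/2 + (j:ℚ)) := by
    apply Finset.prod_congr rfl; intro j _; ring
  have h3 : ∑ k ∈ Finset.range (m+1), Lk m k / (2*k+1) = 1/2 * ∑ k ∈ Finset.range (m+1), Lk m k / (1/2 + k) := by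
    rw [Finset.mul_sum]; apply Finset.sum_congr rfl; intro k _
    have : (2*(k:ℚ)+1) ≠ 0 := by positivity
    have : (1/2+(k:ℚ)) ≠ 0 := by positivity
    field_simp
    ring
  have h4 : (∏ j ∈ Finset.range m, (1/2 + (j:ℚ))) ≠ 0 := by
    apply Finset.prod_ne_zero_iff.mpr; intro j _; positivity
  have : (1/2+(m:ℚ)) ≠ 0 := by positivity
  rw [h3, h, h1, Finset.prod_range_succ]
  field_simp
  ring

lemma YL4 (m : ℕ) (hm : 1 ≤ m) : ∑ k ∈ Finset.range (m+1), Lk m k / (2*k+2) = 0 := by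
  have h := legendre m 1 (by norm_num)
  have h1 : ∏ j ∈ Finset.range m, ((j:ℚ)+1-1) = 0 := by
    apply Finset.prod_eq_zero (i := 0) (by simp; omega); simp
  have h3 : ∑ k ∈ Finset.range (m+1), Lk m k / (2*k+2) = 1/2 * ∑ k ∈ Finset.range (m+1), Lk m k / (1 + k) := by
    rw [Finset.mul_sum]; apply Finset.sum_congr rfl; intro k _
    have : (1+(k:ℚ)) ≠ 0 := by positivity
    field_simp
    ring
  rw [h3, h, h1]; simp

end S17

namespace S17

/-! ### Part E2 : reduction of the sums modulo powers of p -/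

section
variable {m : ℕ} (hp : (2*m+1).Prime)
include hp

lemma errM2 (s : Finset ℕ) (hs : ∀ k ∈ s, k ≤ m) (d : ℕ → ℕ)
    (hd : ∀ k ∈ s, ¬ ((2*m+1 : ℕ):ℤ) ∣ (d k : ℤ)) :
    M (2*m+1) 2 (∑ k ∈ s, Dk m k / d k - ∑ k ∈ s, Lk m k / d k) := by
  rw [← Finset.sum_sub_distrib]
  apply M_sum hp
  intro k hk
  rw [← sub_div]
  exact M_div hp (d k) (hd k hk) (Dk_sub_M hp k (hs k hk))

lemma errM1 (s : Finset ℕ) (hs : ∀ k ∈ s, k ≤ m) (d : ℕ → ℕ)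
    (hd : ∀ k ∈ s, ¬ ((2*m+1 : ℕ):ℤ) ∣ (d k : ℤ) ∨ d k = 2*m+1) :
    M (2*m+1) 1 (∑ k ∈ s, Dk m k / d k - ∑ k ∈ s, Lk m k / d k) := by
  rw [← Finset.sum_sub_distrib]
  apply M_sum hp
  intro k hk
  rw [← sub_div]
  rcases hd k hk with h | h
  · exact M_mono hp (by norm_num) (M_div hp (d k) h (Dk_sub_M hp k (hs k hk)))
  · rw [h]; exact M_divp hp (Dk_sub_M hp k (hs k hk))

omit hp in
lemma dvd_cases (d : ℕ) (h0 : 0 < d) (h1 : d < 3*(2*m+1)) (h2 : d ≠ 2*(2*m+1)) :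
    ¬ ((2*m+1 : ℕ):ℤ) ∣ (d : ℤ) ∨ d = 2*m+1 := by
  by_cases h : ((2*m+1 : ℕ):ℤ) ∣ (d : ℤ)
  · right
    have h : 2*m+1 ∣ d := by exact_mod_cast h
    obtain ⟨c, hc⟩ := h
    have : c < 3 := by
      by_contra hh
      have : (2*m+1)*3 ≤ (2*m+1)*c := Nat.mul_le_mul_left _ (by omega)
      omega
    interval_cases c <;> omega
  · left; exact h

lemma X2_M (hm : 1 ≤ m) : M (2*m+1) 3 ((2*(m:ℚ)+1)^2 * X2 m - (2*m+1)) := by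
  have h := errM1 hp (Finset.range (m+1)) (fun k hk => by simp at hk; omega) (fun k => 2*k+1)
    (fun k hk => dvd_cases _ (by omega) (by simp at hk; omega) (by omega))
  have h2 := M_mul hp (M_p hp 2) h
  convert h2 using 1
  push_cast
  rw [YL2]
  unfold X2
  field_simp

lemma X4_M (hm : 1 ≤ m) : M (2*m+1) 2 (X4 m) := by
  have h := errM2 hp (Finset.range (m+1)) (fun k hk => by simp at hk; omega) (fun k => 2*k+2)
    (fun k hk => (dvd_cases _ (by omega) (by simp at hk; omega) (by simp at hk; omega)).resolve_right (by omega))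
  convert h using 1
  push_cast
  rw [YL4 m hm]
  unfold X4
  simp

omit hp in
lemma two_ndvd {p : ℕ} (hp : p.Prime) (h2 : p ≠ 2) (r : ℕ) : ¬ (p:ℤ) ∣ ((2^r : ℕ):ℤ) := by
  intro h
  have h : p ∣ 2^r := by exact_mod_cast h
  exact h2 ((Nat.prime_dvd_prime_iff_eq hp Nat.prime_two).mp (hp.dvd_of_dvd_pow h))

lemma prodM0 (s : Finset ℕ) (d : ℕ → ℕ) (hd : ∀ k ∈ s, ¬ ((2*m+1 : ℕ):ℤ) ∣ (d k : ℤ)) :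
    ¬ ((2*m+1 : ℕ):ℤ) ∣ ((∏ k ∈ s, d k : ℕ) : ℤ) := by
  intro h
  have h : 2*m+1 ∣ ∏ k ∈ s, d k := by exact_mod_cast h
  obtain ⟨k, hk, h⟩ := (Prime.dvd_finsetProd_iff hp.prime _).mp h
  exact hd k hk (by exact_mod_cast h)

/-- case `p = 4k+3` -/
lemma case3 (k : ℕ) (hk : m = 2*k+1) :
    M (2*m+1) 2 (∑ n ∈ Finset.range (2*m+1), (n:ℚ)^2 * seqT n / 4^n -
      (-(1/4) * ((2*m+1) * ∑ k ∈ Finset.range (m+1), Lk m k / (4*k+3)) - (2*m+1)/2)) ∧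
    M (2*m+1) 2 (∑ n ∈ Finset.range (2*m+1), (n:ℚ)^3 * seqT n / 4^n -
      (3/8 * ((2*m+1) * ∑ k ∈ Finset.range (m+1), Lk m k / (4*k+3)) + (2*m+1)/2)) := by
  have hm : 1 ≤ m := by omega
  have hx2 := M_mono hp (show 2 ≤ 3 by norm_num) (X2_M hp hm)
  have hx4 := X4_M hp hm
  have e1 := errM2 hp (Finset.range (m+1)) (fun k hk => by simp at hk; omega) (fun k => 4*k+1)
    (fun k hk => (dvd_cases _ (by omega) (by simp at hk; omega) (by simp at hk; omega)).resolve_right (by omega))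
  have e3 := errM1 hp (Finset.range (m+1)) (fun k hk => by simp at hk; omega) (fun k => 4*k+3)
    (fun k hk => dvd_cases _ (by omega) (by simp at hk; omega) (by simp at hk; omega))
  push_cast at e1 e3
  have p1 := M_p hp 1
  push_cast at p1
  have y1 : M (2*m+1) 1 (∑ k ∈ Finset.range (m+1), Lk m k / (4*k+1)) := by
    rw [YL1]
    have hk' : k ∈ Finset.range m := by simp; omega
    rw [← Finset.mul_prod_erase _ _ hk']
    have a1 : M (2*m+1) 1 ((4*(k:ℚ)+3) * ∏ x ∈ (Finset.range m).erase k, (4*(x:ℚ)+3)) := by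
      refine M_mul hp (r := 1) (s := 0) ?_ (M_prod hp _ _ (fun i _ => ?_))
      · convert p1 using 1
        rw [hk]; push_cast; ring
      · exact_mod_cast M_nat hp (4*i+3)
    have a2 := M_div hp _ (prodM0 hp (Finset.range (m+1)) (fun k => 4*k+1)
      (fun k hk => (dvd_cases _ (by omega) (by simp at hk; omega) (by simp at hk; omega)).resolve_right (by omega))) a1
    push_cast at a2
    exact a2
  have y3 : M (2*m+1) 0 ((2*m+1) * ∑ k ∈ Finset.range (m+1), Lk m k / (4*k+3)) := by
    rw [YL3]
    have hk' : k ∈ Finset.range (m+1) := by simp; omega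
    rw [← Finset.mul_prod_erase _ _ hk']
    have a1 : M (2*m+1) 0 (∏ x ∈ (Finset.range m), (4*(x:ℚ)+1)) := by
      refine M_prod hp _ _ (fun i _ => ?_)
      exact_mod_cast M_nat hp (4*i+1)
    have a2 := M_div hp _ (prodM0 hp ((Finset.range (m+1)).erase k) (fun k => 4*k+3)
      (fun j hj => (dvd_cases _ (by omega) (by simp at hj; omega) (by simp at hj; omega)).resolve_right (by simp at hj; omega))) a1
    push_cast at a2
    convert a2 using 1
    have : (2*(m:ℚ)+1) = 4*k+3 := by rw [hk]; push_cast; ring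
    rw [this]
    have : 4*(k:ℚ)+3 ≠ 0 := by positivity
    have : (∏ x ∈ (Finset.range (m+1)).erase k, (4*(x:ℚ)+3)) ≠ 0 := by
      apply Finset.prod_ne_zero_iff.mpr; intro j _; positivity
    field_simp
  have f1 : M (2*m+1) 1 (X1 m) := by
    have := M_add hp (M_mono hp (show 1 ≤ 2 by norm_num) e1) y1
    convert this using 1
    unfold X1; ring
  have g1 : M (2*m+1) 2 ((2*m+1) * X1 m) := by
    have := M_mul hp p1 f1
    convert this using 1
    ring
  have g3 : M (2*m+1) 2 ((2*m+1) * X3 m - (2*m+1) * ∑ k ∈ Finset.range (m+1), Lk m k / (4*k+3)) := by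
    have := M_mul hp p1 e3
    convert this using 1
    unfold X3; ring
  have g3' : M (2*m+1) 2 ((2*m+1)^3 * X3 m) := by
    have h0 := M_add hp (M_mono hp (Nat.zero_le 2) g3) y3
    have h0 := M_mul hp (M_p hp 2) h0
    convert h0 using 1
    push_cast
    ring
  have g4 : M (2*m+1) 2 ((2*m+1)^2 * X4 m) := by
    have := M_mul hp (M_nat hp ((2*m+1)^2)) hx4
    convert this using 1
    push_cast; ring
  have g4' : M (2*m+1) 2 ((2*m+1)^4 * X4 m) := by
    have := M_mul hp (M_nat hp ((2*m+1)^4)) hx4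
    convert this using 1
    push_cast; ring
  constructor
  · apply M_cancel hp _ (two_ndvd hp (by omega) 2)
    rw [S2_eq]
    have := M_add hp (M_sub hp g1 g3) (M_sub hp (M_mul hp (M_nat hp 4) g3') (M_mul hp (M_nat hp 2) hx2))
    convert this using 1
    push_cast
    ring
  · apply M_cancel hp _ (two_ndvd hp (by omega) 3)
    rw [S3_eq]
    have := M_add hp (M_mul hp (M_nat hp 4) (M_add hp (M_sub hp g4' g4) hx2)) (M_sub hp (M_mul hp (M_nat hp 3) g3) (M_add hp (M_mul hp (M_nat hp 12) g3') g1))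
    convert this using 1
    push_cast
    ring

/-- case `p = 4k+1` -/
lemma case1 (k : ℕ) (hk : m = 2*k) :
    M (2*m+1) 3 (∑ n ∈ Finset.range (2*m+1), (n:ℚ)^2 * seqT n / 4^n -
      ((1/4) * ((2*m+1) * ∑ k ∈ Finset.range (m+1), Lk m k / (4*k+1) + (Dk m k - Lk m k))
       -(1/4) * ((2*m+1) * ∑ k ∈ Finset.range (m+1), Lk m k / (4*k+3)) - (2*m+1)/2)) ∧
    M (2*m+1) 3 (∑ n ∈ Finset.range (2*m+1), (n:ℚ)^3 * seqT n / 4^n -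
      (-(1/8) * ((2*m+1) * ∑ k ∈ Finset.range (m+1), Lk m k / (4*k+1) + (Dk m k - Lk m k))
       + 3/8 * ((2*m+1) * ∑ k ∈ Finset.range (m+1), Lk m k / (4*k+3)) + (2*m+1)/2)) := by
  have hk0 : 1 ≤ k := by
    by_contra h
    have : m = 0 := by omega
    rw [this] at hp; exact hp.one_lt.ne' rfl
  have hm : 1 ≤ m := by omega
  have hx2 := (X2_M hp hm)
  have hx4 := X4_M hp hm
  have e3 := errM2 hp (Finset.range (m+1)) (fun k hk => by simp at hk; omega) (fun k => 4*k+3)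
    (fun k hk => (dvd_cases _ (by omega) (by simp at hk; omega) (by simp at hk; omega)).resolve_right (by omega))
  have e1 := errM2 hp ((Finset.range (m+1)).erase k) (fun k hk => by simp at hk; omega) (fun k => 4*k+1)
    (fun k hk => (dvd_cases _ (by omega) (by simp at hk; omega) (by simp at hk; omega)).resolve_right (by simp at hk; omega))
  push_cast at e1 e3
  have p1 := M_p hp 1
  push_cast at p1
  have hk' : k ∈ Finset.range (m+1) := by simp; omega
  have y3 : M (2*m+1) 1 (∑ k ∈ Finset.range (m+1), Lk m k / (4*k+3)) := by
    rw [YL3]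
    have hk' : k ∈ Finset.range m := by simp; omega
    rw [← Finset.mul_prod_erase _ _ hk']
    have a1 : M (2*m+1) 1 ((4*(k:ℚ)+1) * ∏ x ∈ (Finset.range m).erase k, (4*(x:ℚ)+1)) := by
      refine M_mul hp (r := 1) (s := 0) ?_ (M_prod hp _ _ (fun i _ => ?_))
      · convert p1 using 1
        rw [hk]; push_cast; ring
      · exact_mod_cast M_nat hp (4*i+1)
    have a2 := M_div hp _ (prodM0 hp (Finset.range (m+1)) (fun k => 4*k+3)
      (fun k hk => (dvd_cases _ (by omega) (by simp at hk; omega) (by simp at hk; omega)).resolve_right (by omega))) a1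
    push_cast at a2
    exact a2
  have g1 : M (2*m+1) 3 ((2*m+1) * X1 m - ((2*m+1) * ∑ k ∈ Finset.range (m+1), Lk m k / (4*k+1) + (Dk m k - Lk m k))) := by
    have := M_mul hp p1 e1
    convert this using 1
    unfold X1
    rw [← Finset.add_sum_erase _ _ hk', ← Finset.add_sum_erase _ (fun k : ℕ => Lk m k / (4*(k:ℚ)+1)) hk']
    have : (2*(m:ℚ)+1) = 4*k+1 := by rw [hk]; push_cast; ring
    rw [this]
    have : 4*(k:ℚ)+1 ≠ 0 := by positivity
    field_simp
    ring
  have f3 : M (2*m+1) 1 (X3 m) := by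
    have := M_add hp (M_mono hp (show 1 ≤ 2 by norm_num) e3) y3
    convert this using 1
    unfold X3; ring
  have g3 : M (2*m+1) 3 ((2*m+1) * X3 m - (2*m+1) * ∑ k ∈ Finset.range (m+1), Lk m k / (4*k+3)) := by
    have := M_mul hp p1 e3
    convert this using 1
    unfold X3; ring
  have g3' : M (2*m+1) 3 ((2*m+1)^3 * X3 m) := by
    have h0 := M_mono hp (show 3 ≤ 4 by norm_num) (M_mul hp (M_p hp 3) f3)
    convert h0 using 1
    push_cast
    ring
  have g4 : M (2*m+1) 3 ((2*m+1)^2 * X4 m) := by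
    have := M_mono hp (show 3 ≤ 4 by norm_num) (M_mul hp (M_p hp 2) hx4)
    convert this using 1
    push_cast; ring
  have g4' : M (2*m+1) 3 ((2*m+1)^4 * X4 m) := by
    have := M_mul hp (M_nat hp ((2*m+1)^2)) g4
    rw [Nat.zero_add] at this
    convert this using 1
    push_cast; ring
  have four : ∀ (c : ℕ) {a : ℚ}, M (2*m+1) 3 a → M (2*m+1) 3 (c*a) := by
    intro c a h
    have := M_mul hp (M_nat hp c) h
    rwa [Nat.zero_add] at this
  constructor
  · apply M_cancel hp _ (two_ndvd hp (by omega) 2)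
    rw [S2_eq]
    have := M_add hp (M_sub hp g1 g3) (M_sub hp (four 4 g3') (four 2 hx2))
    convert this using 1
    push_cast
    ring
  · apply M_cancel hp _ (two_ndvd hp (by omega) 3)
    rw [S3_eq]
    have := M_add hp (four 4 (M_add hp (M_sub hp g4' g4) hx2)) (M_sub hp (four 3 g3) (M_add hp (four 12 g3') g1))
    convert this using 1
    push_cast
    ring

end

end S17

namespace S17

/-! ### Part F3 : the case p ≡ 3 mod 4 -/

lemma prod_pairs {R : Type*} [CommRing R] (f : ℕ → R) (k : ℕ) :
    ∏ j ∈ Finset.range (2*k+1), f j = f 0 * ∏ i ∈ Finset.range k, (f (k-i) * f (k+1+i)) := by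
  rw [Finset.prod_range_succ', mul_comm, two_mul, Finset.prod_range_add, Finset.prod_mul_distrib]
  congr 2
  · rw [← Finset.prod_range_reflect]
    apply Finset.prod_congr rfl
    intro j hj
    simp at hj
    congr 1; omega
  · apply Finset.prod_congr rfl
    intro j hj
    congr 1; ring

lemma prod_pairs' {R : Type*} [CommRing R] (f : ℕ → R) (k : ℕ) :
    ∏ j ∈ (Finset.range (2*k+2)).erase k, f j = f (2*k+1) * ∏ i ∈ Finset.range k, (f (k-1-i) * f (k+1+i)) := by
  have : (Finset.range (2*k+2)).erase k = Finset.range k ∪ Finset.Ico (k+1) (2*k+2) := by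
    ext j; simp; omega
  rw [this, Finset.prod_union (by
    rw [Finset.disjoint_left]; intro j; simp; omega)]
  rw [Finset.prod_Ico_eq_prod_range, show 2*k+2-(k+1) = k+1 by omega, Finset.prod_range_succ, Finset.prod_mul_distrib,
    Finset.prod_range_reflect, show k+1+k = 2*k+1 by ring]
  ring

lemma pow_eq_prod {R : Type*} [CommRing R] (c : R) (k : ℕ) : c^k = ∏ _i ∈ Finset.range k, c := by simp

lemma two_fact (k : ℕ) : ((2*k).factorial) = (∏ i ∈ Finset.range k, (2*i+1)) * 2^k * k.factorial := by
  induction k with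
  | zero => simp
  | succ k ih =>
    rw [show 2*(k+1) = 2*k+1+1 by ring, Nat.factorial_succ, Nat.factorial_succ, ih, Finset.prod_range_succ, Nat.factorial_succ]
    ring

lemma choose3 (k : ℕ) : (2*k+1).choose k * (k+1) * k.factorial = (2*k+1) * 2^k * ∏ i ∈ Finset.range k, (2*i+1) := by
  have h := Nat.choose_mul_factorial_mul_factorial (show k ≤ 2*k+1 by omega)
  rw [show 2*k+1-k = k+1 by omega, Nat.factorial_succ, Nat.factorial_succ, two_fact] at h
  have : 0 < k.factorial := Nat.factorial_pos k
  apply Nat.eq_of_mul_eq_mul_right this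
  linarith

lemma B3 (k : ℕ) (hp : (4*k+3).Prime) :
    M (4*k+3) 2 ((2*((2*k+1:ℕ):ℚ)+1) * ∑ j ∈ Finset.range (2*k+1+1), Lk (2*k+1) j / (4*j+3) - R1 (4*k+3)) := by
  have hp' : (2*(2*k+1)+1).Prime := by convert hp using 1; ring
  have hk' : k ∈ Finset.range (2*k+1+1) := by simp; omega
  rw [YL3, ← Finset.mul_prod_erase _ _ hk']
  set A : ℤ := ∏ j ∈ Finset.range (2*k+1), (4*(j:ℤ)+1) with hA
  set B : ℤ := ∏ j ∈ (Finset.range (2*k+2)).erase k, (4*(j:ℤ)+3) with hB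
  have hB0 : ¬ ((4*k+3 : ℕ):ℤ) ∣ B := by
    have := prodM0 hp' ((Finset.range (2*k+2)).erase k) (fun k => 4*k+3)
      (fun j hj => (dvd_cases _ (by omega) (by simp at hj; omega) (by simp at hj; omega)).resolve_right (by simp at hj; omega))
    have e : 2*(2*k+1)+1 = 4*k+3 := by ring
    rw [e] at this
    rw [hB]
    exact_mod_cast this
  set C : ℤ := ((2*k+1).choose k : ℤ) with hC
  have h1 : (2*((2*k+1:ℕ):ℚ)+1) * ((∏ j ∈ Finset.range (2*k+1), (4*(j:ℚ)+1)) / ((4*(k:ℚ)+3) * ∏ j ∈ (Finset.range (2*k+1+1)).erase k, (4*(j:ℚ)+3)))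
     = (A:ℚ)/B := by
    rw [hA, hB]
    push_cast
    rw [show 2*(2*(k:ℚ)+1)+1 = 4*k+3 by ring]
    have : 4*(k:ℚ)+3 ≠ 0 := by positivity
    field_simp
  have h2 : R1 (4*k+3) = ((2*(4*(k:ℤ)+3) + 2 - 4*16^k) * C^2 : ℤ) := by
    unfold R1
    rw [show (4*k+3-1)/2 = 2*k+1 by omega, show (4*k+3)/4 = k by omega, show 4*k+3-1 = 4*k+2 by omega, pow_add, pow_mul, hC]
    push_cast
    norm_num
    left; ring
  rw [h1, h2]
  have hB1 : (B:ℚ) ≠ 0 := by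
    intro h
    have : B = 0 := by exact_mod_cast h
    exact hB0 (by simp [this])
  have hu : ¬ ((4*k+3 : ℕ):ℤ) ∣ (4*(k+1)*(4*(k+1))*((k.factorial : ℕ)^2)) := by
    intro h
    have h : 4*k+3 ∣ 4*(k+1)*(4*(k+1))*(k.factorial^2) := by exact_mod_cast h
    have h4 : ¬ 4*k+3 ∣ 4*(k+1) := by
      intro h
      have : 4*k+3 ∣ 1 := by
        have := (Nat.dvd_sub h (dvd_refl (4*k+3)))
        rwa [show 4*(k+1) - (4*k+3) = 1 by omega] at this
      have := Nat.le_of_dvd one_pos this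
      omega
    rcases hp.dvd_mul.mp h with h | h
    · rcases hp.dvd_mul.mp h with h | h <;> exact h4 h
    · have := (hp.dvd_factorial).mp (hp.dvd_of_dvd_pow h)
      omega
  apply M_cancel hp _ hu
  apply M_cancel hp _ hB0
  have : ((A:ℚ)/B - (((2*(4*(k:ℤ)+3) + 2 - 4*16^k) * C^2 : ℤ):ℚ)) * ((4*(k+1)*(4*(k+1))*((k.factorial : ℕ)^2) : ℤ) : ℚ) * B
    = ((A - B * ((2*(4*(k:ℤ)+3) + 2 - 4*16^k) * C^2)) * (4*(k+1)*(4*(k+1))*((k.factorial : ℕ)^2)) : ℤ) := by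
    push_cast
    field_simp
  rw [this]
  apply M_int' hp
  clear this h1 h2
  have key : (((A - B * ((2*(4*(k:ℤ)+3) + 2 - 4*16^k) * C^2)) * (4*(k+1)*(4*(k+1))*((k.factorial : ℕ)^2)) : ℤ) : ZMod ((4*k+3)^2)) = 0 := by
    set P : ZMod ((4*k+3)^2) := 4*k+3 with hP
    have hP2 : P^2 = 0 := by
      have := ZMod.natCast_self ((4*k+3)^2)
      push_cast at this
      exact this
    set O : ZMod ((4*k+3)^2) := ∏ i ∈ Finset.range k, (2*(i:ZMod ((4*k+3)^2))+1) with hO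
    have eA : (A : ZMod ((4*k+3)^2)) = (-4)^k * O^2 := by
      rw [hA]; push_cast
      rw [prod_pairs, hO, ← Finset.prod_pow, pow_eq_prod, ← Finset.prod_mul_distrib]
      simp only [Nat.cast_zero, mul_zero, zero_add, one_mul]
      apply Finset.prod_congr rfl
      intro i hi
      simp at hi
      rw [Nat.cast_sub hi.le]
      push_cast
      linear_combination hP2 + (P + (4*k+3)) * hP - 2 * (P + (4*k+3)) * hP
    have eB : (B : ZMod ((4*k+3)^2)) = (1+2*P) * ((-16)^k * (k.factorial:ZMod ((4*k+3)^2))^2) := by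
      rw [hB]; push_cast
      rw [prod_pairs', ← Finset.prod_range_add_one_eq_factorial]
      push_cast
      rw [← Finset.prod_pow, pow_eq_prod, ← Finset.prod_mul_distrib]
      congr 1
      · rw [hP]; ring
      apply Finset.prod_congr rfl
      intro i hi
      simp at hi
      rw [show k-1-i = k-(1+i) by omega, Nat.cast_sub (by omega)]
      push_cast
      linear_combination hP2 + (P + (4*k+3)) * hP - 2 * (P + (4*k+3)) * hP
    have eC : (C : ZMod ((4*k+3)^2)) * (k+1) * k.factorial = (2*k+1) * 2^k * O := by
      have := congrArg (Nat.cast : ℕ → ZMod ((4*k+3)^2)) (choose3 k)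
      push_cast at this
      rw [hC, hO]
      push_cast
      exact this
    -- Fermat
    have eq : ∃ s : ZMod ((4*k+3)^2), 4*(16:ZMod ((4*k+3)^2))^k = 1 + P*s := by
      have := Fact.mk hp
      have h2 : ((2:ℕ):ZMod (4*k+3)) ≠ 0 := by
        intro h
        rw [ZMod.natCast_eq_zero_iff] at h
        have := Nat.le_of_dvd (by norm_num) h
        omega
      have := ZMod.pow_card_sub_one_eq_one h2
      rw [show 4*k+3-1 = 4*k+2 by omega, pow_add, pow_mul] at this
      have h3 : ((4*16^k - 1 : ℤ) : ZMod (4*k+3)) = 0 := by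
        push_cast at this ⊢
        norm_num at this
        linear_combination this
      rw [ZMod.intCast_zmod_eq_zero_iff_dvd] at h3
      obtain ⟨s, hs⟩ := h3
      have := congrArg (Int.cast : ℤ → ZMod ((4*k+3)^2)) hs
      push_cast at this
      refine ⟨s, ?_⟩
      rw [hP]
      linear_combination this
    obtain ⟨s, hs⟩ := eq
    push_cast
    rw [eA, eB]
    have h16 : (16:ZMod ((4*k+3)^2))^k = 4^k*4^k := by rw [← mul_pow]; norm_num
    have h4 : (4:ZMod ((4*k+3)^2))^k = 2^k*2^k := by rw [← mul_pow]; norm_num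
    have hk4 : (4*(k:ZMod ((4*k+3)^2))) = P - 3 := by rw [hP]; ring
    rw [neg_pow, neg_pow (16:ZMod ((4*k+3)^2))]
    have e1 : ((-1)^k * 4^k * O^2 - (1+2*P) * ((-1)^k*16^k*(k.factorial:ZMod ((4*k+3)^2))^2) * ((2*(4*k+3)+2-4*16^k)*(C:ZMod ((4*k+3)^2))^2)) * (4*(k+1)*(4*(k+1))*(k.factorial:ZMod ((4*k+3)^2))^2)
       = (-1)^k * (k.factorial:ZMod ((4*k+3)^2))^2 * ((4*(k+1))^2*4^k * O^2 - (1+2*P) * (4*16^k) * (2*(4*k+3)+2-4*16^k) * 4 * ((C:ZMod ((4*k+3)^2)) * (k+1) * k.factorial)^2) := by ring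
    rw [e1, eC, hs]
    have e2 : (4 * ((k:ZMod ((4*k+3)^2))+1)) = P + 1 := by linear_combination hk4
    have e3 : (2*(k:ZMod ((4*k+3)^2)) + 1)^2 * 4 = (P-1)^2 := by
      linear_combination (4*(k:ZMod ((4*k+3)^2)) + P + 1) * hk4
    have e4 : 2*(4*(k:ZMod ((4*k+3)^2))+3) = 2*P := by rw [hP]
    have e5 : ((4*((k:ZMod ((4*k+3)^2))+1))^2*4^k * O^2 - (1+2*P) * (1+P*s) * (2*(4*k+3)+2-(1+P*s)) * 4 * ((2*k+1)*2^k*O)^2) = 0 := by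
      rw [e2, e4, h4]
      have : (1+2*P) * (1+P*s) * (2*P+2-(1+P*s)) * 4 * ((2*k+1)*2^k*O)^2 = (1+2*P) * (1+P*s) * (2*P+2-(1+P*s)) * ((2*(k:ZMod ((4*k+3)^2)) + 1)^2 * 4) * (2^k*O)^2 := by ring
      rw [this, e3]
      have : (P+1)^2 - (1+2*P) * (1+P*s) * (2*P+2-(1+P*s)) * (P-1)^2 = 0 := by
        linear_combination (1 - (2*s-s^2)*(1-3*P^2+2*P^3) + (1+2*P)*(3-2*P)) * hP2
      linear_combination (2^k*O)^2 * this
    rw [e5, mul_zero]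
  rw [ZMod.intCast_zmod_eq_zero_iff_dvd] at key
  exact_mod_cast key

end S17

namespace S17

/-! ### Part G : truncated exponential expansions of products in a ring with `q^3 = 0` -/

section ring
variable {R : Type*} [CommRing R]

/-- `∏_{i=1}^n (s+i)` -/
def H (n : ℕ) (s : R) : R := ∏ i ∈ Finset.range n, (s + ((i:R)+1))

/-- truncated exponential of `2x` -/
def ex (x : R) : R := 1 + 2*x + 2*x^2

lemma ex_zero : ex (0:R) = 1 := by unfold ex; ring

lemma ex_add {q a b : R} (hq : q^3 = 0) : ex (q*a) * ex (q*b) = ex (q*(a+b)) := by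
  unfold ex
  linear_combination (4*a*b*(a+b) + 4*q*a^2*b^2) * hq

lemma ex_inj {q a b h : R} (hq : q^3 = 0) (h2 : 2*h = 1) (hab : ex (q*a) = ex (q*b)) : q*a = q*b := by
  have h1 : (q*a - q*b) * (1 + q*(a+b)) = 0 := by
    unfold ex at hab
    linear_combination h*hab - (q*a-q*b)*(1+q*(a+b))*h2
  linear_combination (1 - q*(a+b) + q^2*(a+b)^2)*h1 - (a-b)*(a+b)^3*q*hq

lemma ex_neg {q a : R} (hq : q^3 = 0) : ex (q*a) * ex (q*(-a)) = 1 := by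
  rw [ex_add hq, add_neg_cancel, mul_zero, ex_zero]

lemma H_zero (n : ℕ) : H n (0:R) = n.factorial := by
  unfold H
  rw [← Finset.prod_range_add_one_eq_factorial]
  push_cast
  apply Finset.prod_congr rfl; intro i _; ring

lemma H_expand {q : R} (hq : q^3 = 0) (n : ℕ) (hn : ∀ i : ℕ, 0 < i → i ≤ n → IsUnit (i:R)) :
    ∃ a b : R, ∀ t : R, H n (t*q) = n.factorial * (1 + a*t*q + b*(t*q)^2) := by
  induction n with
  | zero => exact ⟨0, 0, fun t => by simp [H]⟩
  | succ n ih =>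
    obtain ⟨a, b, hab⟩ := ih (fun i h0 h1 => hn i h0 (by omega))
    obtain ⟨v, hv⟩ := (hn (n+1) (by omega) le_rfl).exists_right_inv
    push_cast at hv
    refine ⟨a+v, b + a*v, fun t => ?_⟩
    have : H (n+1) (t*q) = H n (t*q) * (t*q + (n+1)) := by
      unfold H; rw [Finset.prod_range_succ]
    rw [this, hab, Nat.factorial_succ]
    push_cast
    linear_combination (n.factorial:R) * b * t^3 * hq - (n.factorial:R) * (t*q + a*(t*q)^2) * hv

lemma H_exp {q h : R} (hq : q^3 = 0) (h2 : 2*h = 1) (n : ℕ) (hn : ∀ i : ℕ, 0 < i → i ≤ n → IsUnit (i:R)) :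
    ∃ a b : R, ∀ t : R, H n (t*q) = n.factorial * ex (q*(a*t+q*b*t^2)) := by
  obtain ⟨a, b, hab⟩ := H_expand hq n hn
  refine ⟨a*h, h*(b - h*a^2), fun t => ?_⟩
  rw [hab]
  congr 1
  unfold ex
  have h3 : q^4 = 0 := by linear_combination q*hq
  linear_combination (-a*t*q - b*t^2*q^2) * h2 - (4*a*h*t*h*(b-h*a^2)*t^2) * hq - 2*(h*(b - h*a^2)*t^2)^2*h3

lemma fact_unit (n : ℕ) (hn : ∀ i : ℕ, 0 < i → i ≤ n → IsUnit (i:R)) : IsUnit (n.factorial : R) := by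
  induction n with
  | zero => simp
  | succ n ih =>
    rw [Nat.factorial_succ, Nat.cast_mul]
    exact (hn (n+1) (by omega) le_rfl).mul (ih (fun i h0 h1 => hn i h0 (by omega)))

/-- doubling: odd and even factors -/
lemma H_double (k : ℕ) (s : R) : H (2*k) (2*s) = 2^k * H k s * ∏ i ∈ Finset.range k, (2*s + (2*(i:R)+1)) := by
  unfold H
  induction k with
  | zero => simp
  | succ k ih =>
    rw [show 2*(k+1) = 2*k+1+1 by ring, Finset.prod_range_succ, Finset.prod_range_succ, ih, Finset.prod_range_succ, Finset.prod_range_succ]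
    push_cast
    ring

lemma H_refl (n : ℕ) (s : R) : H n s = (-1)^n * H n (-s-(n+1)) := by
  unfold H
  rw [← Finset.prod_range_reflect, pow_eq_prod (-1:R), ← Finset.prod_mul_distrib]
  apply Finset.prod_congr rfl
  intro i hi
  simp at hi
  rw [show n-1-i = n-(1+i) by omega, Nat.cast_sub (by omega)]
  push_cast
  ring

lemma H_add (a b : ℕ) (s : R) : H (a+b) s = H a s * H b (s+a) := by
  unfold H
  rw [Finset.prod_range_add]
  congr 1
  apply Finset.prod_congr rfl; intro i _; push_cast; ring

lemma H_doubling {q : R} (k : ℕ) (hk : 4*(k:R)+1 = 4*q) (n : R) :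
    H (2*k) (2*n*q) * H k ((-n-2)*q) = (-4)^k * H k (n*q) * H (2*k) ((-n-2)*q) := by
  have h1 := H_double k (n*q)
  rw [two_mul k, H_add k k ((-n-2)*q), ← two_mul k]
  rw [mul_assoc 2 n q, h1]
  have h2 : (-2)^k * H k ((-n-2)*q + k) = ∏ i ∈ Finset.range k, (2*(n*q) + (2*(i:R)+1)) := by
    rw [← Finset.prod_range_reflect]
    unfold H
    rw [pow_eq_prod (-2:R), ← Finset.prod_mul_distrib]
    apply Finset.prod_congr rfl
    intro i hi
    simp at hi
    rw [show k-1-i = k-(1+i) by omega, Nat.cast_sub (by omega)]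
    push_cast
    linear_combination -hk
  rw [← h2, show (-4:R) = 2 * (-2) by norm_num, mul_pow]
  ring

/-- main expansions -/
lemma main_exp {q : R} (hq : q^3 = 0) (k : ℕ) (hk0 : 1 ≤ k) (hk : 4*(k:R)+1 = 4*q)
    (hu : ∀ i : ℕ, 0 < i → i ≤ 4*k → IsUnit (i:R)) :
    ∃ x z : R, (∀ n : R, H (2*k) (n*q) = (2*k).factorial * ex (q*(2*n*x))) ∧
      (∀ n : R, H k (n*q) = k.factorial * ex (q*(3*n*x + (2*n+n^2)*q*z))) ∧
      (-4)^k = ex (q*(-2*x)) := by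
  obtain ⟨h, h2⟩ := (hu 2 (by omega) (by omega)).exists_right_inv
  obtain ⟨j, h3⟩ := (hu 3 (by omega) (by omega)).exists_right_inv
  push_cast at h2 h3
  obtain ⟨f, w, hF⟩ := H_exp hq h2 (2*k) (fun i h0 h1 => hu i h0 (by omega))
  obtain ⟨g, z, hG⟩ := H_exp hq h2 k (fun i h0 h1 => hu i h0 (by omega))
  have uF := fact_unit (2*k) (fun i h0 h1 => hu i h0 (by omega))
  have uG := fact_unit k (fun i h0 h1 => hu i h0 (by omega))
  have uex : ∀ a : R, IsUnit (ex (q*a)) := fun a => IsUnit.of_mul_eq_one _ (ex_neg hq (a := a))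
  have d : ∀ n : R, ex (q*(f*(2*n)+q*w*(2*n)^2)) * ex (q*(g*(-n-2)+q*z*(-n-2)^2)) = (-4)^k * (ex (q*(g*n+q*z*n^2)) * ex (q*(f*(-n-2)+q*w*(-n-2)^2))) := by
    intro n
    have := H_doubling k hk n
    rw [hF, hG, hF, hG] at this
    apply (uF.mul uG).mul_left_cancel
    linear_combination this
  have d0 := d 0
  have d1 := d (-1)
  have d2 := d (-2)
  rw [ex_add hq, ex_add hq] at d0 d1 d2
  set κ : R := (-4)^k
  have k0 : κ = ex (q*(2*f-2*g + q*(4*z-4*w))) := by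
    have := congrArg (· * ex (q*(-(g*0+q*z*0^2 + (f*(-0-2)+q*w*(-0-2)^2))))) d0
    simp only [mul_assoc κ] at this
    rw [ex_neg hq, ex_add hq, mul_one] at this
    rw [← this]; congr 1; ring
  have k1 : κ = ex (q*(-f + q*(3*w))) := by
    have := congrArg (· * ex (q*(-(g*(-1)+q*z*(-1)^2 + (f*(-(-1)-2)+q*w*(-(-1)-2)^2))))) d1
    simp only [mul_assoc κ] at this
    rw [ex_neg hq, ex_add hq, mul_one] at this
    rw [← this]; congr 1; ring
  have k2 : κ = ex (q*(-4*f+2*g + q*(16*w-4*z))) := by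
    have := congrArg (· * ex (q*(-(g*(-2)+q*z*(-2)^2 + (f*(-(-2)-2)+q*w*(-(-2)-2)^2))))) d2
    simp only [mul_assoc κ] at this
    rw [ex_neg hq, ex_add hq, mul_one] at this
    rw [← this]; congr 1; ring
  have e01 := ex_inj hq h2 (k0.symm.trans k1)
  have e12 := ex_inj hq h2 (k1.symm.trans k2)
  have hw : q^2*w = 0 := by
    -- e01 - e12 : 6 q^2 w = 0 up to sign
    have h6 : 6 * (q^2*w) = 0 := by linear_combination e01 - e12
    linear_combination h*j*h6 - q^2*w*h3*2*h - q^2*w*h2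
  have hrel : q*(2*g) = q*(3*f + 4*q*z) := by linear_combination -e01 - 7*hw
  refine ⟨f*h, z, fun n => ?_, fun n => ?_, ?_⟩
  · rw [hF]
    congr 2
    linear_combination n^2 * hw - q*n*f*h2
  · rw [hG]
    congr 2
    linear_combination h*n*hrel - q*n*g*h2 + 2*n*q^2*z*h2
  · rw [k1]
    congr 1
    linear_combination 3*hw + q*f*h2
  
end ring

end S17

namespace S17

/-! ### Part G2 : binomial coefficients through the products `H` -/

section ring2
variable {R : Type*} [CommRing R]

lemma H_cast (n a : ℕ) : ((H n (a:ℤ) : ℤ) : R) = H n (a:R) := by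
  unfold H; push_cast; rfl

lemma H_fact (n a : ℕ) : H n (a:ℤ) * (a.factorial : ℤ) = ((a+n).factorial : ℤ) := by
  induction n with
  | zero => simp [H]
  | succ n ih =>
    have : H (n+1) (a:ℤ) = H n (a:ℤ) * (a + (n+1)) := by
      unfold H; rw [Finset.prod_range_succ]
    rw [this, show a+(n+1) = a+n+1 by ring, Nat.factorial_succ]
    push_cast
    rw [← ih]; ring

lemma fact_ne (n : ℕ) : ((n.factorial : ℕ) : ℤ) ≠ 0 := by exact_mod_cast Nat.factorial_ne_zero n

lemma I6 (k : ℕ) : ((6*k).choose k : ℤ) * k.factorial * H k ((4*k+1 : ℕ):ℤ) * (6*k+1) = H (2*k) ((4*k+1 : ℕ):ℤ) * (5*k+1) := by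
  have h1 := H_fact k (4*k+1)
  have h2 := H_fact (2*k) (4*k+1)
  have h3 := Nat.choose_mul_factorial_mul_factorial (show k ≤ 6*k by omega)
  rw [show 6*k-k = 5*k by omega] at h3
  rw [show 4*k+1+k = 5*k+1 by ring, Nat.factorial_succ (5*k)] at h1
  rw [show 4*k+1+2*k = 6*k+1 by ring, Nat.factorial_succ (6*k), ← h3] at h2
  push_cast at h1 h2 ⊢
  apply mul_right_cancel₀ (fact_ne (4*k+1))
  linear_combination ((6*k).choose k : ℤ) * k.factorial * (6*k+1) * h1 - (5*k+1) * h2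

lemma I10 (k : ℕ) : ((10*k).choose k : ℤ) * k.factorial * H k ((2*(4*k+1) : ℕ):ℤ) * ((10*k+1)*(10*k+2)) = H (2*k) ((2*(4*k+1) : ℕ):ℤ) * ((9*k+1)*(9*k+2)) := by
  have h1 := H_fact k (2*(4*k+1))
  have h2 := H_fact (2*k) (2*(4*k+1))
  have h3 := Nat.choose_mul_factorial_mul_factorial (show k ≤ 10*k by omega)
  rw [show 10*k-k = 9*k by omega] at h3
  rw [show 2*(4*k+1)+k = 9*k+1+1 by ring, Nat.factorial_succ, Nat.factorial_succ] at h1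
  rw [show 2*(4*k+1)+2*k = 10*k+1+1 by ring, Nat.factorial_succ, Nat.factorial_succ, ← h3] at h2
  push_cast at h1 h2 ⊢
  apply mul_right_cancel₀ (fact_ne (2*(4*k+1)))
  linear_combination ((10*k).choose k : ℤ) * k.factorial * ((10*k+1)*(10*k+2)) * h1 - ((9*k+1)*(9*k+2)) * h2

lemma I55 (k : ℕ) : ((10*k).choose (5*k) : ℤ) * (4*k).factorial * (H k ((4*k+1 : ℕ):ℤ))^2 * ((10*k+1)*(10*k+2)) =
    2 * H (4*k) ((4*k+1 : ℕ):ℤ) * H (2*k) ((2*(4*k+1) : ℕ):ℤ) * (5*k+1)^2 := by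
  have h1 := H_fact k (4*k+1)
  have h2 := H_fact (2*k) (2*(4*k+1))
  have h3 := Nat.choose_mul_factorial_mul_factorial (show 5*k ≤ 10*k by omega)
  have h4 := H_fact (4*k) (4*k+1)
  rw [show 10*k-5*k = 5*k by omega] at h3
  rw [show 4*k+1+k = 5*k+1 by ring, Nat.factorial_succ (5*k)] at h1
  rw [show 2*(4*k+1)+2*k = 10*k+1+1 by ring, Nat.factorial_succ, Nat.factorial_succ, ← h3,
    show 2*(4*k+1) = 4*k+1+4*k+1 by ring, Nat.factorial_succ] at h2
  rw [show 4*k+1+4*k+1 = 2*(4*k+1) by ring] at h2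
  push_cast at h1 h2 h4 ⊢
  rw [← h4] at h2
  have h5 : (((4*k+1).factorial : ℕ) : ℤ) = (4*k+1) * (4*k).factorial := by rw [Nat.factorial_succ]; push_cast; ring
  apply mul_right_cancel₀ (mul_ne_zero (fact_ne (4*k+1)) (show (4*(k:ℤ)+1) ≠ 0 by positivity))
  apply mul_right_cancel₀ (fact_ne (4*k+1))
  set F1 : ℤ := (((4*k+1).factorial : ℕ) : ℤ)
  set H1 := H k (4*(k:ℤ)+1)
  have e1 : ((10*k).choose (5*k) : ℤ) * (4*k).factorial * H1^2 * ((10*k+1)*(10*k+2)) * (F1 * (4*k+1)) * F1 =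
     ((10*k).choose (5*k) : ℤ) * (H1*F1)^2 * ((10*k+1)*(10*k+2)) * F1 := by
    linear_combination (-((10*k).choose (5*k) : ℤ) * H1^2 * ((10*k+1)*(10*k+2)) * F1^2) * h5
  rw [e1, h1]
  linear_combination (-(5*k+1)^2 * F1) * h2

lemma I3 (k : ℕ) : ((3*k).choose k : ℤ) * k.factorial = H k ((2*k : ℕ):ℤ) := by
  have h1 := H_fact k (2*k)
  have h3 := Nat.choose_mul_factorial_mul_factorial (show k ≤ 3*k by omega)
  rw [show 3*k-k = 2*k by omega] at h3
  rw [show 2*k+k = 3*k by ring, ← h3] at h1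
  push_cast at h1 ⊢
  apply mul_right_cancel₀ (fact_ne (2*k))
  linear_combination -h1

lemma I2 (k : ℕ) : ((2*k).choose k : ℤ) * k.factorial^2 = (2*k).factorial := by
  have h3 := Nat.choose_mul_factorial_mul_factorial (show k ≤ 2*k by omega)
  rw [show 2*k-k = k by omega] at h3
  rw [← h3]; push_cast; ring

lemma prod_pairs2 (f : ℕ → R) (k : ℕ) :
    ∏ j ∈ (Finset.range (2*k+1)).erase k, f j = ∏ i ∈ Finset.range k, (f (k-1-i) * f (k+1+i)) := by
  have : (Finset.range (2*k+1)).erase k = Finset.range k ∪ Finset.Ico (k+1) (2*k+1) := by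
    ext j; simp; omega
  rw [this, Finset.prod_union (by
    rw [Finset.disjoint_left]; intro j; simp; omega)]
  rw [Finset.prod_Ico_eq_prod_range, show 2*k+1-(k+1) = k by omega, Finset.prod_mul_distrib,
    Finset.prod_range_reflect]

lemma prod_pairs3 (f : ℕ → R) (k : ℕ) :
    ∏ j ∈ Finset.range (2*k), f j = ∏ i ∈ Finset.range k, (f (k-1-i) * f (k+i)) := by
  rw [two_mul, Finset.prod_range_add, Finset.prod_mul_distrib, Finset.prod_range_reflect]

lemma nil_unit {q u : R} (hq : q^3 = 0) (hu : IsUnit u) (c : R) : IsUnit (c*q+u) := by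
  obtain ⟨v, hv⟩ := hu.exists_right_inv
  refine IsUnit.of_mul_eq_one (v*(1 - c*q*v + (c*q*v)^2)) ?_
  linear_combination c^3*v^3*hq + (1 - c*q*v + (c*q*v)^2)*hv

theorem lemVI {q : R} (hq : q^3 = 0) (k : ℕ) (hk0 : 1 ≤ k) (hk : 4*(k:R)+1 = 4*q)
    (hu : ∀ i : ℕ, 0 < i → i ≤ 4*k → IsUnit (i:R)) (u : R)
    (h8 : 8*u = 4*k*(-1)^k*(15*((2*k).choose k : R) - 20*((6*k).choose k : R) + 6*((10*k).choose k : R) + 3*((10*k).choose (5*k) : R))) :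
    IsUnit u ∧
    (∏ j ∈ Finset.range (2*k), (4*(j:R)+3)) * (4^k * (k.factorial:R)^2) +
      ((-1)^k * ((2*k).choose k : R) * ((3*k).choose k : R)) *
       ((∏ i ∈ Finset.range k, (4*((i:R)+1)^2 - (4*q)^2)) - 4^k * (k.factorial:R)^2) *
       (∏ j ∈ (Finset.range (2*k+1)).erase k, (4*(j:R)+1)) =
    u^2 * (∏ j ∈ (Finset.range (2*k+1)).erase k, (4*(j:R)+1)) * (4^k * (k.factorial:R)^2) := by
  obtain ⟨x, z, hF, hG, hκ⟩ := main_exp hq k hk0 hk hu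
  have u2 : IsUnit (2:R) := by exact_mod_cast hu 2 (by omega) (by omega)
  have u3 : IsUnit (3:R) := by exact_mod_cast hu 3 (by omega) (by omega)
  have uF := fact_unit (2*k) (fun i h0 h1 => hu i h0 (by omega))
  have uG := fact_unit k (fun i h0 h1 => hu i h0 (by omega))
  have uex : ∀ a : R, IsUnit (ex (q*a)) := fun a => IsUnit.of_mul_eq_one _ (ex_neg hq (a := a))
  have i2 := congrArg (Int.cast : ℤ → R) (I2 k)
  have i3 := congrArg (Int.cast : ℤ → R) (I3 k)
  have i6 := congrArg (Int.cast : ℤ → R) (I6 k)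
  have i10 := congrArg (Int.cast : ℤ → R) (I10 k)
  have i55 := congrArg (Int.cast : ℤ → R) (I55 k)
  simp only [Int.cast_mul, Int.cast_pow, H_cast] at i2 i3 i6 i10 i55
  push_cast at i2 i3 i6 i10 i55
  set c : R := ((2*k).choose k : R)
  set c3 : R := ((3*k).choose k : R)
  set c6 : R := ((6*k).choose k : R)
  set c10 : R := ((10*k).choose k : R)
  set c55 : R := ((10*k).choose (5*k) : R)
  set F0 : R := ((2*k).factorial : R)
  set G0 : R := (k.factorial : R)
  rw [hk] at i6 i10 i55
  have uc : IsUnit c := by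
    rw [← i2] at uF
    exact isUnit_of_mul_isUnit_left uF
  -- the 4k factorial
  have H4 : ∀ s : R, H (4*k) s = H (2*k) s * H (2*k) (-s-4*q) := by
    intro s
    rw [show 4*k = 2*k+2*k by ring, H_add, H_refl (2*k) (s + ((2*k:ℕ):R))]
    rw [Even.neg_one_pow (by simp), one_mul]
    congr 2
    push_cast
    linear_combination -hk
  have f4 : ((4*k).factorial : R) = F0 * (F0 * ex (q*(-8*x))) := by
    rw [← H_zero, H4, H_zero, show -(0:R)-4*q = (-4)*q by ring, hF]
    congr 3; ring
  have w4 : H (4*k) (4*q) = F0 * (F0 * ex (q*(-8*x))) := by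
    rw [H4, hF, show -(4*q)-4*q = (-8)*q by ring, hF, mul_mul_mul_comm, ex_add hq, mul_assoc]
    congr 4; ring
  rw [show (2*(4*q)) = 8*q by ring] at i10 i55
  rw [w4, f4] at i55
  rw [hG, hF] at i6 i10 i55
  have k56 : 4*(5*(k:R)+1) = 20*q-1 := by linear_combination 5*hk
  have k66 : 4*(6*(k:R)+1) = 24*q-2 := by linear_combination 6*hk
  have k91 : 4*(9*(k:R)+1) = 36*q-5 := by linear_combination 9*hk
  have k92 : 4*(9*(k:R)+2) = 36*q-1 := by linear_combination 9*hk
  have k101 : 4*(10*(k:R)+1) = 40*q-6 := by linear_combination 10*hk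
  have k102 : 4*(10*(k:R)+2) = 40*q-2 := by linear_combination 10*hk
  have d6 : c6 * (24*q-2) = c * ex (q*(-4*x-24*q*z)) * (20*q-1) := by
    apply (uG.mul (uG.mul (uex (3*4*x+(2*4+4^2)*q*z)))).mul_right_cancel
    have : c * ex (q*(-4*x-24*q*z)) * (20*q-1) * (G0 * (G0 * ex (q*(3*4*x+(2*4+4^2)*q*z)))) =
       (c * G0^2) * (ex (q*(-4*x-24*q*z)) * ex (q*(3*4*x+(2*4+4^2)*q*z))) * (20*q-1) := by ring
    rw [this, ex_add hq, i2]
    rw [show -4*x-24*q*z + (3*4*x+(2*4+4^2)*q*z) = 2*4*x by ring, ← k56, ← k66]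
    linear_combination 4*i6
  have d10 : c10 * ((40*q-6)*(40*q-2)) = c * ex (q*(-8*x-80*q*z)) * ((36*q-5)*(36*q-1)) := by
    apply (uG.mul (uG.mul (uex (3*8*x+(2*8+8^2)*q*z)))).mul_right_cancel
    have : c * ex (q*(-8*x-80*q*z)) * ((36*q-5)*(36*q-1)) * (G0 * (G0 * ex (q*(3*8*x+(2*8+8^2)*q*z)))) =
       (c * G0^2) * (ex (q*(-8*x-80*q*z)) * ex (q*(3*8*x+(2*8+8^2)*q*z))) * ((36*q-5)*(36*q-1)) := by ring
    rw [this, ex_add hq, i2]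
    rw [show -8*x-80*q*z + (3*8*x+(2*8+8^2)*q*z) = 2*8*x by ring, ← k91, ← k92, ← k101, ← k102]
    linear_combination 16*i10
  have d55 : c55 * ((40*q-6)*(40*q-2)) = 2 * c * ex (q*(-8*x-48*q*z)) * (20*q-1)^2 := by
    apply (((uF.mul uF).mul (uex (-8*x))).mul (uG.mul (uG.mul ((uex (3*4*x+(2*4+4^2)*q*z)).mul (uex (3*4*x+(2*4+4^2)*q*z)))))).mul_right_cancel
    have : 2 * c * ex (q*(-8*x-48*q*z)) * (20*q-1)^2 * (F0 * F0 * ex (q*(-8*x)) * (G0 * (G0 * (ex (q*(3*4*x+(2*4+4^2)*q*z)) * ex (q*(3*4*x+(2*4+4^2)*q*z)))))) =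
       2 * (c * G0^2) * (F0 * F0 * ex (q*(-8*x))) * (ex (q*(-8*x-48*q*z)) * (ex (q*(3*4*x+(2*4+4^2)*q*z)) * ex (q*(3*4*x+(2*4+4^2)*q*z)))) * (20*q-1)^2 := by ring
    rw [this, ex_add hq, ex_add hq, i2]
    rw [show -8*x-48*q*z + (3*4*x+(2*4+4^2)*q*z + (3*4*x+(2*4+4^2)*q*z)) = 2*8*x by ring, ← k56, ← k101, ← k102, ← ex_add hq]
    linear_combination 16*i55
  have hk' : 4*(k:R) = 4*q-1 := by linear_combination hk
  have um1 : IsUnit (-1:R) := isUnit_one.neg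
  have uD : IsUnit ((24*q-2)*((40*q-6)*(40*q-2))) := by
    refine IsUnit.mul ?_ (IsUnit.mul ?_ ?_)
    · rw [sub_eq_add_neg]; exact nil_unit hq u2.neg 24
    · rw [sub_eq_add_neg]; refine nil_unit hq ?_ 40
      rw [show (6:R) = 2*3 by norm_num]; exact (u2.mul u3).neg
    · rw [sub_eq_add_neg]; exact nil_unit hq u2.neg 40
  have key : u = -(-1)^k * c * ex (q*(2*x+2*q*z)) := by
    have u8 : IsUnit (8:R) := by rw [show (8:R) = 2*2*2 by norm_num]; exact (u2.mul u2).mul u2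
    apply (u8.mul uD).mul_left_cancel
    have e1 : 8 * ((24*q-2)*((40*q-6)*(40*q-2))) * u = (8*u) * ((24*q-2)*((40*q-6)*(40*q-2))) := by ring
    rw [e1, h8, hk']
    have e2 : (4*q-1)*(-1)^k*(15*c-20*c6+6*c10+3*c55) * ((24*q-2)*((40*q-6)*(40*q-2))) =
      (4*q-1)*(-1)^k*(15*c*((24*q-2)*((40*q-6)*(40*q-2))) - 20 * (c6*(24*q-2)) * ((40*q-6)*(40*q-2)) + 6 * (c10 * ((40*q-6)*(40*q-2))) * (24*q-2)
       + 3 * (c55 * ((40*q-6)*(40*q-2))) * (24*q-2)) := by ring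
    rw [e2, d6, d10, d55]
    unfold ex
    linear_combination (-1)^k * c * ((-114688) + (78848)*z^1 + (122880)*x^1 + (76800)*x^1*z^1 + (-92160)*x^2 + (720896)*q^1 + (-1355776)*q^1*z^1 + (545280)*q^1*z^2 + (-1441792)*q^1*x^1 + (-5337088)*q^1*x^1*z^1 + (2088960)*q^1*x^2 + (9093120)*q^2*z^1 + (-34494464)*q^2*z^2 + (4849664)*q^2*x^1 + (93372416)*q^2*x^1*z^1 + (-17137664)*q^2*x^2 + (-18677760)*q^3*z^1 + (590307328)*q^3*z^2 + (-612433920)*q^3*x^1*z^1 + (43122688)*q^3*x^2 + (-3760619520)*q^4*z^2 + (1281884160)*q^4*x^1*z^1 + (7667712000)*q^5*z^2) * hq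
  refine ⟨?_, ?_⟩
  · rw [key]
    exact ((um1.pow k).neg.mul uc).mul (uex _)
  -- second part
  set N : R := ∏ j ∈ Finset.range (2*k), (4*(j:R)+3) with hN
  set Dn : R := ∏ j ∈ (Finset.range (2*k+1)).erase k, (4*(j:R)+1) with hDn
  have eD : Dn = (-16)^k * (H k (1*q) * H k ((-1)*q)) := by
    rw [hDn, prod_pairs2, H, H, ← Finset.prod_mul_distrib, pow_eq_prod (-16:R), ← Finset.prod_mul_distrib]
    apply Finset.prod_congr rfl
    intro i hi
    simp at hi
    rw [show k-1-i = k-(1+i) by omega, Nat.cast_sub (by omega)]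
    push_cast
    linear_combination (4*(k:R)+1+4*q) * hk
  have eN : N = (-4)^k * ((∏ i ∈ Finset.range k, (2*q + (2*(i:R)+1))) * (∏ i ∈ Finset.range k, (2*(-q) + (2*(i:R)+1)))) := by
    rw [hN, prod_pairs3, ← Finset.prod_mul_distrib, pow_eq_prod (-4:R), ← Finset.prod_mul_distrib]
    apply Finset.prod_congr rfl
    intro i hi
    simp at hi
    rw [show k-1-i = k-(1+i) by omega, Nat.cast_sub (by omega)]
    push_cast
    linear_combination (4*(k:R)+1+4*q) * hk
  have hd1 := H_double k q
  have hd2 := H_double k (-q)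
  have hN2 : 4^k * N * (H k (1*q) * H k ((-1)*q)) = (-4)^k * (H (2*k) (2*q) * H (2*k) ((-2)*q)) := by
    rw [show (-2)*q = 2*(-q) by ring, hd1, hd2, eN, show (4:R)^k = 2^k*2^k by rw [← mul_pow]; norm_num, one_mul, neg_one_mul]
    ring
  rw [hG, hG] at hN2 eD
  rw [hF, hF] at hN2
  have s1 : G0 * ex (q*(3*1*x+(2*1+1^2)*q*z)) * (G0 * ex (q*(3*(-1)*x+(2*(-1)+(-1)^2)*q*z))) = G0^2 * ex (q*(2*q*z)) := by
    have : ex (q*(2*q*z)) = ex (q*(3*1*x+(2*1+1^2)*q*z)) * ex (q*(3*(-1)*x+(2*(-1)+(-1)^2)*q*z)) := by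
      rw [ex_add hq]; congr 1; ring
    rw [this]; ring
  have s2 : F0 * ex (q*(2*2*x)) * (F0 * ex (q*(2*(-2)*x))) = F0^2 := by
    have : (1:R) = ex (q*(2*2*x)) * ex (q*(2*(-2)*x)) := by
      rw [ex_add hq, ← ex_zero]; congr 1; ring
    linear_combination -F0^2 * this
  rw [s1] at hN2 eD
  rw [s2] at hN2
  have u4 : IsUnit ((4:R)^k) := by rw [show (4:R) = 2*2 by norm_num]; exact (u2.mul u2).pow k
  have h16 : (-16:R)^k = 4^k * ex (q*(-2*x)) := by rw [← hκ, ← mul_pow]; norm_num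
  have hκ2 : (4:R)^k * 4^k = ex (q*(-4*x)) := by
    have : ex (q*(-4*x)) = ex (q*(-2*x)) * ex (q*(-2*x)) := by rw [ex_add hq]; congr 1; ring
    rw [this, ← hκ, ← mul_pow, ← mul_pow]; norm_num
  have eN2 : N = c^2 * ex (q*(4*x-4*q*z)) * Dn := by
    apply ((u4.mul (uG.mul uG)).mul (uex (2*q*z))).mul_left_cancel
    have e1 : 4^k * (G0*G0) * ex (q*(2*q*z)) * N = 4^k * N * (G0^2 * ex (q*(2*q*z))) := by ring
    rw [e1, hN2, hκ, eD, h16, ← i2]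
    have e2 : 4^k * (G0*G0) * ex (q*(2*q*z)) * (c^2 * ex (q*(4*x-4*q*z)) * (4^k * ex (q*(-2*x)) * (G0^2 * ex (q*(2*q*z))))) =
      (c*G0^2)^2 * (4^k * 4^k * (ex (q*(-2*x)) * (ex (q*(4*x-4*q*z)) * (ex (q*(2*q*z)) * ex (q*(2*q*z)))))) := by ring
    rw [e2, hκ2, ex_add hq, ex_add hq, ex_add hq, ex_add hq, mul_comm]
    congr 3
    ring
  -- L
  have eL : (-1)^k * c * c3 = c^2 * ex (q*(4*x-8*q*z)) := by
    have h1 : H (2*k) ((-4)*q) = (-1)^k * H k ((-4)*q) * (c3 * G0) := by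
      rw [i3, two_mul k, H_add, H_refl k ((-4)*q+k)]
      have : -((-4)*q+(k:R))-((k:R)+1) = 2*(k:R) := by linear_combination -hk
      rw [this]; ring
    rw [hF, hG] at h1
    apply (uG.mul (uG.mul (uex (3*(-4)*x+(2*(-4)+(-4)^2)*q*z)))).mul_left_cancel
    have e1 : G0 * (G0 * ex (q*(3*(-4)*x+(2*(-4)+(-4)^2)*q*z))) * ((-1)^k * c * c3) = c * ((-1)^k * (G0 * ex (q*(3*(-4)*x+(2*(-4)+(-4)^2)*q*z))) * (c3 * G0)) := by ring
    rw [e1, ← h1, ← i2]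
    have e2 : G0 * (G0 * ex (q*(3*(-4)*x+(2*(-4)+(-4)^2)*q*z))) * (c^2 * ex (q*(4*x-8*q*z))) = c * (c * G0^2 * (ex (q*(3*(-4)*x+(2*(-4)+(-4)^2)*q*z)) * ex (q*(4*x-8*q*z)))) := by ring
    rw [e2, ex_add hq]
    congr 4
    ring
  have eQ : ∏ i ∈ Finset.range k, (4*((i:R)+1)^2 - (4*q)^2) = 4^k * G0^2 * ex (q*(8*q*z)) := by
    have e1 : ∏ i ∈ Finset.range k, (4*((i:R)+1)^2 - (4*q)^2) = 4^k * (H k (2*q) * H k ((-2)*q)) := by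
      rw [H, H, ← Finset.prod_mul_distrib, pow_eq_prod (4:R), ← Finset.prod_mul_distrib]
      apply Finset.prod_congr rfl
      intro i hi
      ring
    rw [e1, hG, hG]
    have : ex (q*(8*q*z)) = ex (q*(3*2*x+(2*2+2^2)*q*z)) * ex (q*(3*(-2)*x+(2*(-2)+(-2)^2)*q*z)) := by
      rw [ex_add hq]; congr 1; ring
    rw [this]; ring
  rw [eQ, eL, eN2, key]
  have hs : ((-1:R)^k)^2 = 1 := by rw [← pow_mul, mul_comm, pow_mul]; norm_num
  have e3 : ex (q*(4*x-4*q*z)) + ex (q*(4*x-8*q*z)) * (ex (q*(8*q*z)) - 1) = ex (q*(2*x+2*q*z))^2 := by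
    unfold ex
    linear_combination ((-64)*x^3 + (-128)*q^1*z^2 + (320)*q^1*x^2*z^1 + (-64)*q^1*x^4 + (-1216)*q^2*x^1*z^2 + (-256)*q^2*x^3*z^1 + (-64)*q^3*z^3 + (3712)*q^3*x^2*z^2 + (-16640)*q^4*x^1*z^3 + (16320)*q^5*z^4) * hq
  linear_combination (c^2 * Dn * 4^k * G0^2) * e3 - (c^2 * ex (q*(2*x+2*q*z))^2 * Dn * 4^k * G0^2) * hs

end ring2

end S17

namespace S17

lemma prim4 : IsPrimitiveRoot (⟨0,1⟩ : GaussianInt) 4 := by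
  refine IsPrimitiveRoot.mk_of_lt _ (by norm_num) ?_ ?_
  · decide
  · intro l h0 h4
    interval_cases l <;> decide

lemma star_char {p : ℕ} [Fact p.Prime] (χ : MulChar (ZMod p) GaussianInt) (h4 : χ^4 = 1) :
    χ.ringHomComp (starRingEnd GaussianInt) = χ⁻¹ := by
  refine eq_inv_of_mul_eq_one_right ?_
  refine MulChar.ext fun a => ?_
  · rw [MulChar.mul_apply, MulChar.ringHomComp_apply, MulChar.one_apply_coe]
    have h : (χ a)^4 = 1 := by rw [← MulChar.pow_apply_coe, h4, MulChar.one_apply_coe]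
    have hn : (χ (a:ZMod p)).norm = 1 := by
      have h2 := congrArg Zsqrtd.normMonoidHom h
      rw [map_pow, map_one] at h2
      have h3 : (χ (a:ZMod p)).norm ^ 4 = 1 := h2
      have h5 := GaussianInt.norm_nonneg (χ (a:ZMod p))
      exact (pow_eq_one_iff_of_nonneg h5 (by norm_num)).1 h3
    have := Zsqrtd.norm_eq_mul_conj (χ (a:ZMod p))
    rw [starRingEnd_apply, ← this, hn]; rfl

lemma V1 {p : ℕ} [Fact p.Prime] (χ : MulChar (ZMod p) GaussianInt) (h4 : orderOf χ = 4) (hd : 4 ∣ p - 1) :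
    jacobiSum χ (χ^2) * star (jacobiSum χ (χ^2)) = (p : GaussianInt) ∧
    Odd (jacobiSum χ (χ^2)).re ∧ Even (jacobiSum χ (χ^2)).im := by
  have h44 : χ^4 = 1 := h4 ▸ pow_orderOf_eq_one χ
  have hs := star_char χ h44
  have n1 : χ ≠ 1 := by rintro rfl; simp at h4
  have n2 : χ^2 ≠ 1 := fun h => by
    have := orderOf_dvd_of_pow_eq_one h; rw [h4] at this; revert this; decide
  have n3 : χ*χ^2 ≠ 1 := fun h => by
    rw [← pow_succ'] at h
    have := orderOf_dvd_of_pow_eq_one h; rw [h4] at this; revert this; decide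
  have hinj : Function.Injective GaussianInt.toComplex := fun a b h => GaussianInt.toComplex_inj.1 h
  constructor
  · have e : star (jacobiSum χ (χ^2)) = jacobiSum χ⁻¹ (χ^2)⁻¹ := by
      rw [← starRingEnd_apply, ← jacobiSum_ringHomComp, ← MulChar.ringHomComp_pow, hs, inv_pow]
    rw [e]
    apply hinj
    rw [map_mul, ← jacobiSum_ringHomComp, ← jacobiSum_ringHomComp, ← MulChar.ringHomComp_inv, ← MulChar.ringHomComp_inv]
    rw [jacobiSum_mul_jacobiSum_inv]
    · simp [ZMod.card]
    · rw [ringChar.eq_zero, ZMod.ringChar_zmod_n]; exact (Fact.out : p.Prime).ne_zero.symm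
    · exact (MulChar.ringHomComp_ne_one_iff hinj).2 n1
    · exact (MulChar.ringHomComp_ne_one_iff hinj).2 n2
    · rw [← MulChar.ringHomComp_mul]; exact (MulChar.ringHomComp_ne_one_iff hinj).2 n3
  · obtain ⟨z, -, hz⟩ := exists_jacobiSum_eq_neg_one_add (n := 4) (by norm_num) h44 (ψ := χ^2)
      (by rw [← pow_mul, mul_comm, pow_mul, h44, one_pow]) (by rwa [ZMod.card]) prim4
    rw [hz]
    have : ((⟨0,1⟩ : GaussianInt) - 1)^2 = ⟨0,-2⟩ := by decide
    rw [this]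
    constructor
    · refine ⟨z.im - 1, ?_⟩
      simp; ring
    · refine ⟨-z.re, ?_⟩
      simp; ring

lemma V2 {p : ℕ} (hp : p.Prime) (h2 : p % 2 = 1) (a b x w : ℤ) (h1 : a^2+b^2 = p) (hx : x^2+w^2 = p) (ha : Odd a) (hb : Even b) (hw : Even w) :
    a^2 = x^2 := by
  have hpp := Nat.prime_iff_prime_int.1 hp
  have hp0 : (p:ℤ) ≠ 0 := by exact_mod_cast hp.ne_zero
  have key : ∀ c : ℤ, a^2+c^2 = p → (p:ℤ) ∣ a*x - c*w → Even c → a^2 = x^2 := by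
    intro c hc hd he
    obtain ⟨t, ht⟩ := hd
    have e1 : (a*x-c*w)^2 + (a*w+c*x)^2 = (p:ℤ)^2 := by
      linear_combination (x^2+w^2) * hc + p * hx
    have hd2 : (p:ℤ) ∣ a*w+c*x := by
      refine hpp.dvd_of_dvd_pow (n := 2) ⟨p - p*t^2, ?_⟩
      rw [ht] at e1; linear_combination e1
    obtain ⟨s, hs⟩ := hd2
    have e2 : t^2+s^2 = 1 := by
      rw [ht, hs] at e1
      have : (p:ℤ)^2 * (t^2+s^2-1) = 0 := by linear_combination e1
      rcases mul_eq_zero.1 this with h | h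
      · exact absurd h (pow_ne_zero _ hp0)
      · linarith
    have hse : Even s := by
      have : Even (p*s) := hs ▸ ((hw.mul_left a).add (he.mul_right x))
      rcases Int.even_mul.1 this with h | h
      · exfalso
        rw [Int.even_iff] at h; omega
      · exact h
    have hs0 : s = 0 := by
      obtain ⟨r, rfl⟩ := hse
      have hr : r^2 ≤ 0 := by nlinarith [sq_nonneg t]
      have : r = 0 := by
        have : r^2 = 0 := le_antisymm hr (sq_nonneg r)
        simpa using this
      simp [this]
    rw [hs0] at hs e2
    have : (p:ℤ) * (a^2-x^2) = 0 := by
      linear_combination (-(a^2)) * hx + (x^2)*hc + (a*w-c*x)*hs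
    rcases mul_eq_zero.1 this with h | h
    · exact absurd h hp0
    · linarith
  have : (p:ℤ) ∣ (a*x-b*w)*(a*x+b*w) := ⟨a^2-w^2, by linear_combination a^2*hx - w^2*h1⟩
  rcases hpp.dvd_or_dvd this with h | h
  · exact key b h1 h hb
  · exact key (-b) (by rw [← h1]; ring) (by rw [neg_mul, sub_neg_eq_add]; exact h) hb.neg
end S17

namespace S17
section V
set_option linter.unusedSectionVars false
variable {p : ℕ} [hpf : Fact p.Prime]

/-- reduction mod p -/
noncomputable def rho (p : ℕ) : ZMod (p^3) →+* ZMod p := ZMod.castHom (dvd_pow_self p (by norm_num)) _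

lemma p3 : ((p:ℕ) : ZMod (p^3))^3 = 0 := by
  have := ZMod.natCast_self (p^3); exact_mod_cast this

lemma rho_int (z : ℤ) : rho p z = z := map_intCast _ _

lemma rho_zero (r : ZMod (p^3)) (h : rho p r = 0) : (p : ZMod (p^3)) ∣ r := by
  obtain ⟨z, rfl⟩ := ZMod.intCast_surjective r
  rw [rho_int, ZMod.intCast_zmod_eq_zero_iff_dvd] at h
  obtain ⟨y, rfl⟩ := h
  exact ⟨(y : ZMod (p^3)), by push_cast; ring⟩

lemma rho_unit (r : ZMod (p^3)) (h : rho p r ≠ 0) : IsUnit r := by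
  obtain ⟨z, rfl⟩ := ZMod.intCast_surjective r
  rw [rho_int, Ne, ZMod.intCast_zmod_eq_zero_iff_dvd] at h
  rw [ZMod.coe_int_isUnit_iff_isCoprime]
  push_cast
  have hpp := Nat.prime_iff_prime_int.1 hpf.out
  exact IsCoprime.pow_left ((Prime.coprime_iff_not_dvd hpp).2 h)

lemma rho_pow (r s : ZMod (p^3)) (h : rho p r = rho p s) : r^p^2 = s^p^2 := by
  have h1 : (p : ZMod (p^3)) ∣ r - s := rho_zero _ (by rw [map_sub, h, sub_self])
  have h2 := dvd_sub_pow_of_dvd_sub h1 2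
  rw [p3, zero_dvd_iff, sub_eq_zero] at h2
  exact h2

lemma rho_lift (c : ZMod p) : ∃ r, rho p r = c := by
  obtain ⟨z, rfl⟩ := ZMod.intCast_surjective c
  exact ⟨z, rho_int z⟩

/-- Teichmueller lift -/
noncomputable def tau (c : ZMod p) : ZMod (p^3) := (Classical.choose (rho_lift c))^p^2

lemma tau_eq (r : ZMod (p^3)) : tau (rho p r) = r^p^2 :=
  rho_pow _ _ (Classical.choose_spec (rho_lift (rho p r)))

lemma rho_tau (c : ZMod p) : rho p (tau c) = c := by
  obtain ⟨r, rfl⟩ := rho_lift c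
  rw [tau_eq, map_pow, pow_two, pow_mul, ZMod.pow_card, ZMod.pow_card]

lemma tau_mul (a b : ZMod p) : tau (a*b) = tau a * tau b := by
  obtain ⟨r, rfl⟩ := rho_lift a
  obtain ⟨s, rfl⟩ := rho_lift b
  rw [← map_mul, tau_eq, tau_eq, tau_eq, mul_pow]

lemma tau_one : tau (1 : ZMod p) = 1 := by
  rw [← map_one (rho p), tau_eq, one_pow]

lemma tau_zero : tau (0 : ZMod p) = 0 := by
  have h0 : p^2 ≠ 0 := pow_ne_zero _ hpf.out.ne_zero
  rw [← map_zero (rho p), tau_eq, zero_pow h0]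

lemma tau_pow (a : ZMod p) (n : ℕ) : tau (a^n) = tau a ^ n := by
  induction n with
  | zero => simp [tau_one]
  | succ n ih => rw [pow_succ a, pow_succ (tau a), tau_mul, ih]

lemma tau_one_sub (a : ZMod p) : tau (1-a) = (1 - tau a)^p^2 := by
  rw [← tau_eq, map_sub, map_one, rho_tau]

lemma tau_order (a : ZMod p) (h : a ≠ 0) : tau a ^ (p-1) = 1 := by
  rw [← tau_pow, ZMod.pow_card_sub_one_eq_one h, tau_one]

/-- tau as a character power -/
noncomputable def tauC (p : ℕ) [Fact p.Prime] : MulChar (ZMod p) (ZMod (p^3)) where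
  toFun := tau
  map_one' := tau_one
  map_mul' := tau_mul
  map_nonunit' a ha := by
    have : a = 0 := by by_contra h; exact ha (isUnit_iff_ne_zero.2 h)
    rw [this, tau_zero]

lemma tauC_apply (a : ZMod p) : tauC p a = tau a := rfl

lemma sum_tau (n : ℕ) (hn : n ≠ 0) : ∑ a : ZMod p, tau a ^ n = if p - 1 ∣ n then ((p-1 : ℕ) : ZMod (p^3)) else 0 := by
  classical
  split_ifs with h
  · obtain ⟨t, rfl⟩ := h
    rw [← Finset.sum_erase_add _ _ (Finset.mem_univ (0 : ZMod p)), tau_zero, zero_pow hn, add_zero]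
    rw [Finset.sum_congr rfl (g := fun _ => (1 : ZMod (p^3)))]
    · simp [Finset.card_erase_of_mem, ZMod.card]
    · intro a ha
      rw [pow_mul, tau_order a (Finset.ne_of_mem_erase ha), one_pow]
  · obtain ⟨g, hg⟩ := IsCyclic.exists_generator (α := (ZMod p)ˣ)
    have ho : orderOf g = p - 1 := by
      rw [orderOf_eq_card_of_forall_mem_zpowers hg, Nat.card_eq_fintype_card, ZMod.card_units]
    have hg1 : (g : ZMod p)^n ≠ 1 := by
      intro h1
      apply h
      rw [← ho]
      apply orderOf_dvd_of_pow_eq_one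
      ext; push_cast; exact h1
    have hu : IsUnit (tau (g:ZMod p) ^ n - 1) := by
      apply rho_unit
      rw [map_sub, map_pow, rho_tau, map_one]
      exact sub_ne_zero.2 hg1
    have : (tau (g:ZMod p) ^ n - 1) * ∑ a : ZMod p, tau a ^ n = 0 := by
      rw [sub_mul, one_mul, sub_eq_zero, Finset.mul_sum]
      refine Fintype.sum_equiv (Units.mulLeft g) _ _ (fun a => ?_)
      rw [← mul_pow, ← tau_mul]; rfl
    exact (hu.mul_right_eq_zero).1 this

lemma one_add_pow3 {R : Type*} [CommRing R] (s : R) (h : s^3 = 0) (n : ℕ) :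
    2*(1+s)^n = 2 + 2*n*s + n*(n-1)*s^2 := by
  induction n with
  | zero => simp
  | succ n ih =>
    rw [pow_succ, ← mul_assoc, ih]; push_cast
    linear_combination (n*(n-1) : R) * h

lemma b_pow (k : ℕ) (hk : p = 4*k+1) (b : ZMod (p^3)) (hb : rho p b ≠ 0) :
    8 * b^(2*k*p^2) = 15*b^(2*k) - 10*b^(6*k) + 3*b^(10*k) := by
  have hw : (p : ZMod (p^3)) ∣ b^(4*k) - 1 := by
    apply rho_zero
    rw [map_sub, map_pow, map_one, sub_eq_zero]
    have := ZMod.pow_card_sub_one_eq_one hb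
    rwa [show p - 1 = 4*k by omega] at this
  obtain ⟨t, ht⟩ := hw
  have h3 := p3 (p := p)
  obtain ⟨s, hs⟩ : ∃ s, s = b^(4*k) - 1 := ⟨_, rfl⟩
  have hs3 : s^3 = 0 := by rw [hs, ht, mul_pow, h3, zero_mul]
  have hps : (p : ZMod (p^3)) * s^2 = 0 := by rw [hs, ht]; linear_combination t^2*h3
  have hps2 : (p : ZMod (p^3))^2 * s = 0 := by rw [hs, ht]; linear_combination t*h3
  have hP : (p : ZMod (p^3)) = 4*k+1 := by
    have := congrArg (Nat.cast : ℕ → ZMod (p^3)) hk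
    push_cast at this; exact this
  have e1 : 2*k*p^2 = 2*k + 4*k*(8*k^2+4*k) := by rw [hk]; ring
  have e2 : b^(4*k) = 1 + s := by rw [hs]; ring
  have e3 := one_add_pow3 s hs3 (8*k^2+4*k)
  have e6 : b^(6*k) = b^(2*k) * (1+s) := by rw [← e2]; ring
  have e10 : b^(10*k) = b^(2*k) * (1+s)^2 := by rw [← e2]; ring
  rw [e1, pow_add, pow_mul b (4*k), e2, e6, e10]
  push_cast at e3
  rw [hP] at hps hps2
  have hs' : s^2*(4*(k:ZMod (p^3))+1) = 0 := by rw [mul_comm]; exact hps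
  linear_combination 4 * b^(2*k) * e3 + b^(2*k) * (4 * hps2 + ((4*k+1)^3 - 4*(4*k+1)) * hps)

lemma sum3V {R : Type*} [CommRing R] (k : ℕ) (hk : 1 ≤ k) (f : ℕ → R) :
    ∑ j ∈ Finset.range (10*k+1), (if 4*k ∣ 3*k+j then f j else 0) = f k + f (5*k) + f (9*k) := by
  rw [← Finset.sum_filter]
  have : (Finset.range (10*k+1)).filter (fun j => 4*k ∣ 3*k+j) = {k, 5*k, 9*k} := by
    ext j
    simp only [Finset.mem_filter, Finset.mem_range, Finset.mem_insert, Finset.mem_singleton]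
    constructor
    · rintro ⟨h1, t, ht⟩
      have h4 : t < 4 := by
        by_contra h
        have : 4*k*4 ≤ 4*k*t := Nat.mul_le_mul_left _ (by omega)
        omega
      interval_cases t <;> omega
    · rintro (rfl | rfl | rfl)
      · exact ⟨by omega, 1, by ring⟩
      · exact ⟨by omega, 2, by ring⟩
      · exact ⟨by omega, 3, by ring⟩
  rw [this, Finset.sum_insert (by simp; omega), Finset.sum_insert (by simp; omega), Finset.sum_singleton, add_assoc]

lemma sumN (k : ℕ) (hk : p = 4*k+1) (hk1 : 1 ≤ k) (N : ℕ) (hN : N ≤ 10*k) :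
    ∑ a : ZMod p, tau a ^ (3*k) * (1 - tau a)^N =
      4*k*((-1)^k * (N.choose k + N.choose (5*k) + N.choose (9*k))) := by
  have h1 : ∀ a : ZMod p, tau a ^ (3*k) * (1 - tau a)^N =
      ∑ j ∈ Finset.range (10*k+1), (-1)^j * (N.choose j : ZMod (p^3)) * tau a ^ (3*k+j) := by
    intro a
    rw [show 1 - tau a = (- tau a) + 1 by ring, add_pow, Finset.mul_sum]
    rw [← Finset.sum_subset (Finset.range_mono (show N+1 ≤ 10*k+1 by omega))]
    · apply Finset.sum_congr rfl
      intro j _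
      rw [neg_pow]; ring
    · intro j _ hj
      rw [Nat.choose_eq_zero_of_lt (by simp at hj; omega)]; simp
  simp_rw [h1]
  rw [Finset.sum_comm]
  simp_rw [← Finset.mul_sum]
  have h2 : ∀ j ∈ Finset.range (10*k+1), (-1)^j * (N.choose j : ZMod (p^3)) * ∑ a : ZMod p, tau a ^ (3*k+j) =
      if 4*k ∣ 3*k+j then (-1)^j * (N.choose j : ZMod (p^3)) * (4*k) else 0 := by
    intro j _
    rw [sum_tau _ (by omega), show p - 1 = 4*k by omega]
    split_ifs <;> push_cast <;> ring
  rw [Finset.sum_congr rfl h2, sum3V k hk1]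
  have e5 : (-1 : ZMod (p^3))^(5*k) = (-1)^k := by
    rw [pow_mul]; norm_num
  have e9 : (-1 : ZMod (p^3))^(9*k) = (-1)^k := by
    rw [pow_mul]; norm_num
  rw [e5, e9]; ring

lemma sumU (k : ℕ) (hk : p = 4*k+1) (hk1 : 1 ≤ k) :
    8 * ∑ a : ZMod p, tau a ^ (3*k) * tau (1-a) ^ (2*k) =
      4*k*(-1)^k*(15*((2*k).choose k : ZMod (p^3)) - 20*((6*k).choose k) + 6*((10*k).choose k) + 3*((10*k).choose (5*k))) := by
  have h1 : ∀ a : ZMod p, 8 * (tau a ^ (3*k) * tau (1-a) ^ (2*k)) =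
      15 * (tau a ^ (3*k) * (1 - tau a)^(2*k)) - 10 * (tau a ^ (3*k) * (1 - tau a)^(6*k))
       + 3 * (tau a ^ (3*k) * (1 - tau a)^(10*k)) := by
    intro a
    by_cases h : a = 1
    · subst h
      rw [tau_one, sub_self, tau_zero, sub_self, zero_pow (by omega), zero_pow (by omega), zero_pow (by omega)]
      ring
    · have := b_pow k hk (1 - tau a) (by
        rw [map_sub, map_one, rho_tau]; exact sub_ne_zero.2 (Ne.symm h))
      rw [tau_one_sub, ← pow_mul, mul_comm (p^2)]
      linear_combination tau a ^ (3*k) * this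
  rw [Finset.mul_sum]
  simp_rw [h1]
  rw [Finset.sum_add_distrib, Finset.sum_sub_distrib, ← Finset.mul_sum, ← Finset.mul_sum, ← Finset.mul_sum,
    sumN k hk hk1 _ (by omega), sumN k hk hk1 _ (by omega), sumN k hk hk1 _ (by omega)]
  have c1 : (2*k).choose (5*k) = 0 := Nat.choose_eq_zero_of_lt (by omega)
  have c2 : (2*k).choose (9*k) = 0 := Nat.choose_eq_zero_of_lt (by omega)
  have c3 : (6*k).choose (9*k) = 0 := Nat.choose_eq_zero_of_lt (by omega)
  have c4 : (6*k).choose (5*k) = (6*k).choose k := Nat.choose_symm_of_eq_add (by omega)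
  have c5 : (10*k).choose (9*k) = (10*k).choose k := Nat.choose_symm_of_eq_add (by omega)
  rw [c1, c2, c3, c4, c5]; push_cast; ring

end V
end S17

namespace S17

lemma sq_gauss (z : GaussianInt) (h : z^2 = -1) : z = ⟨0,1⟩ ∨ z = ⟨0,-1⟩ := by
  obtain ⟨a, b⟩ := z
  rw [pow_two, Zsqrtd.ext_iff] at h
  simp at h
  obtain ⟨h1, h2⟩ := h
  have : a * b = 0 := by linarith
  rcases mul_eq_zero.1 this with rfl | rfl
  · have : b*b = 1 := by linarith
    rcases mul_self_eq_one_iff.1 this with rfl | rfl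
    · exact Or.inl rfl
    · exact Or.inr rfl
  · nlinarith [mul_self_nonneg a]

lemma lift_exists {R : Type*} [CommRing R] (z : GaussianInt) (h : z^2 = -1) (t : R) (ht : t^2 = -1) :
    ∃ φ : GaussianInt →+* R, φ z = t := by
  rcases sq_gauss z h with rfl | rfl
  · refine ⟨Zsqrtd.lift ⟨t, by rw [← pow_two, ht]; simp⟩, ?_⟩
    simp
  · refine ⟨Zsqrtd.lift ⟨-t, by rw [neg_mul_neg, ← pow_two, ht]; simp⟩, ?_⟩
    simp

theorem lemV (p k : ℕ) (hk1 : 1 ≤ k) (hpk : p = 4*k+1) (hp : p.Prime) (x y : ℤ) (hxy : (p:ℤ) = x^2+4*y^2) :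
    ∃ u v : ZMod (p^3),
      8 * u = 4*(k:ZMod (p^3))*(-1)^k*(15*((2*k).choose k : ZMod (p^3)) - 20*((6*k).choose k : ZMod (p^3)) + 6*((10*k).choose k : ZMod (p^3)) + 3*((10*k).choose (5*k) : ZMod (p^3)))
      ∧ u*v = (p : ZMod (p^3)) ∧ (u+v)^2 = 4*(x:ZMod (p^3))^2 := by
  haveI : Fact p.Prime := ⟨hp⟩
  obtain ⟨χ, hχ⟩ := MulChar.exists_mulChar_orderOf (ZMod p) (n := 4) (by rw [ZMod.card]; omega) prim4
  have h44 : χ^4 = 1 := hχ ▸ pow_orderOf_eq_one χ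
  obtain ⟨hJ, hodd, heven⟩ := V1 χ hχ (by omega)
  obtain ⟨J, hJd⟩ : ∃ J, J = jacobiSum χ (χ^2) := ⟨_, rfl⟩
  rw [← hJd] at hJ hodd heven
  have hnorm : J.re^2 + J.im^2 = p := by
    have := congrArg Zsqrtd.re hJ
    simp at this
    linarith
  have hre : J.re^2 = x^2 := V2 hp (by omega) J.re J.im x (2*y) hnorm (by rw [hxy]; ring) hodd heven (by simp)
  obtain ⟨g, hg⟩ := IsCyclic.exists_generator (α := (ZMod p)ˣ)
  have ho : orderOf g = p - 1 := by
    rw [orderOf_eq_card_of_forall_mem_zpowers hg, Nat.card_eq_fintype_card, ZMod.card_units]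
  have hext : ∀ {S : Type} [CommRing S] (f f' : MulChar (ZMod p) S), f g = f' g → f = f' := by
    intro S _ f f' h
    rw [MulChar.eq_iff hg]; exact h
  have hz : (χ g)^2 = -1 := by
    have h4 : (χ g)^4 = 1 := by rw [← MulChar.pow_apply_coe, h44, MulChar.one_apply_coe]
    have h2 : (χ g)^2 ≠ 1 := by
      intro h
      have : χ^2 = 1 := hext _ _ (by rw [MulChar.pow_apply_coe, h, MulChar.one_apply_coe])
      have := orderOf_dvd_of_pow_eq_one this; rw [hχ] at this; revert this; decide
    have : ((χ g)^2-1)*((χ g)^2+1) = 0 := by linear_combination h4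
    rcases mul_eq_zero.1 this with h | h
    · exact absurd (sub_eq_zero.1 h) h2
    · exact eq_neg_of_add_eq_zero_left h
  have hg4 : tau (g:ZMod p)^(4*k) = 1 := by
    rw [show 4*k = p-1 by omega]; exact tau_order _ g.ne_zero
  have ht2 : tau (g:ZMod p)^(2*k) = -1 := by
    have hu : IsUnit (tau (g:ZMod p)^(2*k) - 1) := by
      apply rho_unit
      rw [map_sub, map_pow, rho_tau, map_one, sub_ne_zero]
      intro h
      have h' : g^(2*k) = 1 := by ext; push_cast; exact h
      have := orderOf_dvd_of_pow_eq_one h'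
      rw [ho] at this
      have := Nat.le_of_dvd (by omega) this
      omega
    have : (tau (g:ZMod p)^(2*k) - 1)*(tau (g:ZMod p)^(2*k) + 1) = 0 := by
      linear_combination hg4
    exact eq_neg_of_add_eq_zero_left (hu.mul_right_eq_zero.1 this)
  obtain ⟨φ, hφ⟩ := lift_exists (χ g) hz (tau (g:ZMod p)^(3*k)) (by
    have : (tau (g:ZMod p)^(3*k))^2 = tau (g:ZMod p)^(2*k) * tau (g:ZMod p)^(4*k) := by ring
    rw [this, hg4, ht2, mul_one])
  have hcomp : χ.ringHomComp φ = (tauC p)^(3*k) := by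
    apply hext
    rw [MulChar.ringHomComp_apply, hφ, MulChar.pow_apply_coe]; rfl
  have hφJ : φ J = ∑ a : ZMod p, tau a ^ (3*k) * tau (1-a) ^ (2*k) := by
    rw [hJd, ← jacobiSum_ringHomComp, ← MulChar.ringHomComp_pow, hcomp, jacobiSum]
    apply Finset.sum_congr rfl
    intro a _
    rw [← pow_mul, MulChar.pow_apply' _ (by omega), MulChar.pow_apply' _ (by omega), tauC_apply, tauC_apply]
    congr 1
    by_cases h : 1 - a = 0
    · rw [h, tau_zero, zero_pow (by omega), zero_pow (by omega)]
    · have := tau_order _ h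
      rw [show p - 1 = 4*k by omega] at this
      rw [show 3*k*2 = 2*k+4*k by ring, pow_add, this, mul_one]
  refine ⟨φ J, φ (star J), ?_, ?_, ?_⟩
  · rw [hφJ]; exact sumU k hpk hk1
  · rw [← map_mul, hJ, map_natCast]
  · have : J + star J = ((2*J.re : ℤ) : GaussianInt) := by
      rw [Zsqrtd.ext_iff]; simp; ring
    rw [← map_add, this, map_intCast]
    have h2 := congrArg (Int.cast : ℤ → ZMod (p^3)) hre
    push_cast at h2 ⊢
    linear_combination 4*h2
end S17

namespace S17

lemma int_facts (p k : ℕ) (hk1 : 1 ≤ k) (hpk : p = 4*k+1) (hp : p.Prime) (x y : ℤ) (hxy : (p:ℤ) = x^2+4*y^2) :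
    ∃ U V : ℤ, ¬ (p:ℤ) ∣ U ∧ (p:ℤ)^3 ∣ U*V - p ∧ (p:ℤ)^3 ∣ (U+V)^2 - 4*x^2 ∧
     (p:ℤ)^3 ∣ (∏ j ∈ Finset.range (2*k), (4*(j:ℤ)+3)) * (4^k * (k.factorial:ℤ)^2) +
      ((-1)^k * ((2*k).choose k : ℤ) * ((3*k).choose k : ℤ)) *
       ((∏ i ∈ Finset.range k, (4*((i:ℤ)+1)^2 - (p:ℤ)^2)) - 4^k * (k.factorial:ℤ)^2) *
       (∏ j ∈ (Finset.range (2*k+1)).erase k, (4*(j:ℤ)+1)) -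
    U^2 * (∏ j ∈ (Finset.range (2*k+1)).erase k, (4*(j:ℤ)+1)) * (4^k * (k.factorial:ℤ)^2) := by
  haveI : Fact p.Prime := ⟨hp⟩
  obtain ⟨u, v, h8, huv, hx⟩ := lemV p k hk1 hpk hp x y hxy
  have hunit : ∀ i : ℕ, 0 < i → i ≤ 4*k → IsUnit (i : ZMod (p^3)) := by
    intro i h0 h1
    apply rho_unit
    rw [map_natCast, Ne, ZMod.natCast_eq_zero_iff]
    intro h
    have := Nat.le_of_dvd h0 h
    omega
  have h4 : IsUnit (4 : ZMod (p^3)) := by exact_mod_cast hunit 4 (by omega) (by omega)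
  obtain ⟨c, hc⟩ := h4.exists_right_inv
  have hP : (p : ZMod (p^3)) = 4*k+1 := by
    have := congrArg (Nat.cast : ℕ → ZMod (p^3)) hpk
    push_cast at this; exact this
  have h3 := p3 (p := p)
  have hq4 : 4*((p : ZMod (p^3))*c) = p := by linear_combination (p : ZMod (p^3)) * hc
  obtain ⟨hu, hmain⟩ := lemVI (q := (p : ZMod (p^3))*c) (by rw [mul_pow, h3, zero_mul]) k hk1
    (by rw [hq4, hP]) hunit u h8
  rw [hq4] at hmain
  obtain ⟨U, rfl⟩ := ZMod.intCast_surjective u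
  obtain ⟨V, rfl⟩ := ZMod.intCast_surjective v
  have key : ∀ z : ℤ, (z : ZMod (p^3)) = 0 → (p:ℤ)^3 ∣ z := by
    intro z hz
    have := (ZMod.intCast_zmod_eq_zero_iff_dvd z (p^3)).1 hz
    exact_mod_cast this
  refine ⟨U, V, ?_, ?_, ?_, ?_⟩
  · intro hd
    rw [ZMod.coe_int_isUnit_iff_isCoprime] at hu
    push_cast at hu
    have h1 : IsCoprime (p:ℤ) U := (IsCoprime.pow_left_iff (by norm_num)).1 hu
    have := h1.isUnit_of_dvd' dvd_rfl hd
    exact (Nat.prime_iff_prime_int.1 hp).not_isUnit this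
  · apply key; push_cast; rw [huv]; simp
  · apply key; push_cast; rw [hx]; simp
  · apply key; push_cast; rw [hmain]; ring

lemma ndvd_y (p : ℕ) (hp : p.Prime) (x y : ℤ) (hxy : (p:ℤ) = x^2+4*y^2) : ¬ (p:ℤ) ∣ y := by
  intro h
  have hpp := Nat.prime_iff_prime_int.1 hp
  have hx : (p:ℤ) ∣ x := by
    apply hpp.dvd_of_dvd_pow (n := 2)
    rw [show x^2 = p - 4*y^2 by rw [hxy]; ring]
    exact dvd_sub dvd_rfl ((dvd_pow h (by norm_num)).mul_left _)
  obtain ⟨a, rfl⟩ := h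
  obtain ⟨b, rfl⟩ := hx
  have h0 : (p:ℤ) ≠ 0 := hpp.ne_zero
  apply hpp.not_isUnit
  apply isUnit_of_dvd_one
  refine ⟨b^2+4*a^2, ?_⟩
  apply mul_left_cancel₀ h0
  linear_combination hxy

lemma final_int (p : ℕ) (hp : p.Prime) (x y U V : ℤ) (hxy : (p:ℤ) = x^2+4*y^2) (hU : ¬ (p:ℤ) ∣ U)
    (h1 : (p:ℤ)^3 ∣ U*V - p) (h2 : (p:ℤ)^3 ∣ (U+V)^2 - 4*x^2) : (p:ℤ)^3 ∣ 16*y^2*V^2 + p^2 := by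
  have hpp := Nat.prime_iff_prime_int.1 hp
  obtain ⟨a, ha⟩ := h1
  obtain ⟨b, hb⟩ := h2
  have hV : (p:ℤ) ∣ V := by
    have : (p:ℤ) ∣ U*V := ⟨1 + p^2*a, by linear_combination ha⟩
    exact (hpp.dvd_or_dvd this).resolve_left hU
  obtain ⟨w, rfl⟩ := hV
  refine ⟨4*w^2 + b*p^2*w^2 - a*(U*(p*w)+p) - 2*w^2*(1+p^2*a) - p*w^4, ?_⟩
  linear_combination (-4*p^2*w^2)*hxy + p^2*w^2*hb - (U*(p*w)+p)*ha - 2*(p*w)^2*ha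

section
variable {p k : ℕ}

lemma caseOne (hk1 : 1 ≤ k) (hp : (2*(2*k)+1).Prime) (x y : ℤ) (hxy : ((2*(2*k)+1 : ℕ):ℤ) = x^2+4*y^2) :
    M (2*(2*k)+1) 3 (∑ n ∈ Finset.range (2*(2*k)+1), (n:ℚ)^2 * seqT n / 4^n - (-4*(y:ℚ)^2)) ∧
    M (2*(2*k)+1) 3 (∑ n ∈ Finset.range (2*(2*k)+1), (n:ℚ)^3 * seqT n / 4^n -
      (2*(y:ℚ)^2 + ((2*(2*k)+1 : ℕ):ℚ)/4 + ((2*(2*k)+1 : ℕ):ℚ)^2/(64*(y:ℚ)^2))) := by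
  obtain ⟨hA, hB⟩ := case1 hp k rfl
  obtain ⟨U, V, hU, hUV, hS, hmain⟩ := int_facts (2*(2*k)+1) k hk1 (by ring) hp x y hxy
  obtain ⟨S0, hS0⟩ : ∃ S0, S0 = ((2*((2*k:ℕ):ℚ)+1) * ∑ j ∈ Finset.range (2*k+1), Lk (2*k) j / (4*j+1) + (Dk (2*k) k - Lk (2*k) k)) := ⟨_, rfl⟩
  obtain ⟨S1, hS1⟩ : ∃ S1, S1 = ((2*((2*k:ℕ):ℚ)+1) * ∑ j ∈ Finset.range (2*k+1), Lk (2*k) j / (4*j+3)) := ⟨_, rfl⟩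
  rw [← hS0, ← hS1] at hA hB
  set N : ℤ := ∏ j ∈ Finset.range (2*k), (4*(j:ℤ)+3) with hN
  set Dn : ℤ := ∏ j ∈ (Finset.range (2*k+1)).erase k, (4*(j:ℤ)+1) with hDn
  set F : ℤ := 4^k * (k.factorial:ℤ)^2 with hF
  set Q : ℤ := ∏ i ∈ Finset.range k, (4*((i:ℤ)+1)^2 - ((2*(2*k)+1:ℕ):ℤ)^2) with hQ
  set L : ℤ := ((-1)^k * ((2*k).choose k : ℤ) * ((3*k).choose k : ℤ)) with hL
  have hpp := Nat.prime_iff_prime_int.1 hp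
  have hNd : ¬ ((2*(2*k)+1 : ℕ):ℤ) ∣ N := by
    have := prodM0 hp (Finset.range (2*k)) (fun j => 4*j+3)
      (fun j hj => (dvd_cases _ (by omega) (by simp at hj; omega) (by simp at hj; omega)).resolve_right (by simp at hj; omega))
    rw [hN]; exact_mod_cast this
  have hDd : ¬ ((2*(2*k)+1 : ℕ):ℤ) ∣ Dn := by
    have := prodM0 hp ((Finset.range (2*k+1)).erase k) (fun j => 4*j+1)
      (fun j hj => (dvd_cases _ (by omega) (by simp at hj; omega) (by simp at hj; omega)).resolve_right (by simp at hj; omega))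
    rw [hDn]; exact_mod_cast this
  have hFd : ¬ ((2*(2*k)+1 : ℕ):ℤ) ∣ F := by
    have h1 : ¬ (2*(2*k)+1 : ℕ) ∣ k.factorial := by
      rw [hp.dvd_factorial]; omega
    have h2 := two_ndvd hp (by omega) (2*k)
    rw [hF]
    intro h
    rcases hpp.dvd_or_dvd h with h | h
    · apply h2; rw [pow_mul]; exact_mod_cast h
    · exact h1 (by exact_mod_cast hpp.dvd_of_dvd_pow h)
  have ne : ∀ z : ℤ, ¬ ((2*(2*k)+1 : ℕ):ℤ) ∣ z → (z:ℚ) ≠ 0 := by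
    intro z hz h
    have : z = 0 := by exact_mod_cast h
    exact hz (this ▸ dvd_zero _)
  have hN0 := ne N hNd
  have hD0 := ne Dn hDd
  have hF0 := ne F hFd
  have hk4 : 4*(k:ℚ)+1 ≠ 0 := by positivity
  have hmem : k ∈ Finset.range (2*k+1) := by simp; omega
  have hfull : ∏ j ∈ Finset.range (2*k+1), (4*(j:ℚ)+1) = (4*(k:ℚ)+1) * Dn := by
    rw [← Finset.mul_prod_erase _ _ hmem, hDn]; push_cast; rfl
  have hNQ : ∏ j ∈ Finset.range (2*k), (4*(j:ℚ)+3) = N := by rw [hN]; push_cast; rfl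
  have hLk : Lk (2*k) k = L := by
    unfold Lk; rw [hL, show 2*k+k = 3*k by ring]; push_cast; ring
  have hprod : ∏ i ∈ Finset.range k, (1 - (2*((2*k:ℕ):ℚ)+1)^2/(4*((i:ℚ)+1)^2)) = (Q:ℚ) / (F:ℚ) := by
    rw [eq_div_iff hF0, hQ, hF]
    have : (k.factorial : ℚ) = ∏ i ∈ Finset.range k, ((i:ℚ)+1) := by
      rw [← Finset.prod_range_add_one_eq_factorial]; push_cast; rfl
    push_cast
    rw [this, pow_eq_prod (4:ℚ) k, ← Finset.prod_pow, ← Finset.prod_mul_distrib, ← Finset.prod_mul_distrib]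
    apply Finset.prod_congr rfl
    intro i _
    have : (i:ℚ)+1 ≠ 0 := by positivity
    field_simp
  have e0 : S0 = N/Dn + (Dk (2*k) k - Lk (2*k) k) := by
    rw [hS0, YL1, hfull, hNQ]
    congr 1
    push_cast
    rw [show 2*(2*(k:ℚ))+1 = 4*k+1 by ring]
    field_simp
  have hDk : Dk (2*k) k = L * (Q/F) := by unfold Dk; rw [hLk, hprod]
  -- S0
  have m0 : M (2*(2*k)+1) 3 (S0 - U^2) := by
    apply M_cancel hp Dn hDd
    apply M_cancel hp F hFd
    have := M_int' hp 3 _ hmain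
    convert this using 1
    rw [e0, hDk, hLk]
    push_cast
    field_simp
    try ring
  have hNU : M (2*(2*k)+1) 1 ((N:ℚ) - U^2*Dn) := by
    have h1 := M_mono hp (show 1 ≤ 3 by norm_num) m0
    have h2 := M_mono hp (show 1 ≤ 2 by norm_num) (Dk_sub_M hp k (by omega))
    have h3 := M_mul hp (M_sub hp h1 h2) (M_int hp Dn)
    convert h3 using 1
    rw [e0]; field_simp; ring
  set P : ℤ := ((2*(2*k)+1:ℕ):ℤ) with hPd
  have hPQ : (P:ℚ) = 4*k+1 := by rw [hPd]; push_cast; ring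
  have hPQ' : (((2*(2*k)+1:ℕ)):ℚ) = 4*k+1 := by push_cast; ring
  have e1 : S1 = P^2 * Dn / (N * (4*P^2-1)) := by
    have hl : ∏ j ∈ Finset.range (2*k), (4*(j:ℚ)+1) = (4*(k:ℚ)+1) * Dn / (4*(2*k)+1) := by
      rw [← hfull, Finset.prod_range_succ]; push_cast
      have : 4*(2*(k:ℚ))+1 ≠ 0 := by positivity
      field_simp
    rw [hS1, YL3, Finset.prod_range_succ, hNQ, hl, hPQ]
    push_cast
    have a1 : 4*(2*(k:ℚ))+1 ≠ 0 := by positivity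
    have a2 : 4*(2*(k:ℚ))+3 ≠ 0 := by positivity
    have a3 : 4*(4*(k:ℚ)+1)^2-1 = (4*(2*(k:ℚ))+1)*(4*(2*(k:ℚ))+3) := by ring
    rw [a3]
    field_simp
    ring
  have hEd : ¬ P ∣ 4*P^2-1 := by
    intro h
    have : P ∣ 1 := by
      have := dvd_sub (show P ∣ 4*P^2 from ⟨4*P, by ring⟩) h
      simpa using this
    exact hpp.not_isUnit (isUnit_of_dvd_one this)
  have hE0 := ne _ hEd
  have m1 : M (2*(2*k)+1) 3 (S1 + V^2) := by
    apply M_cancel hp N hNd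
    apply M_cancel hp (4*P^2-1) hEd
    apply M_cancel hp U hU
    apply M_cancel hp U hU
    obtain ⟨a, ha⟩ := hUV
    have t1 : M (2*(2*k)+1) 3 (-((P:ℚ)^2 * ((N:ℚ) - U^2*Dn))) := by
      have := M_mul hp (M_p hp 2) hNU
      have := M_neg hp this
      convert this using 3
      rw [hPd, Int.cast_natCast]
    have t2 := M_int' hp 3 (P^4*N*4 + a*(U*V+P)*N*(4*P^2-1)*P^3) ⟨P*N*4 + a*(U*V+P)*N*(4*P^2-1), by ring⟩
    have t := M_add hp t1 t2
    convert t using 1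
    have ha' : (U:ℚ)*V - P = P^3*a := by exact_mod_cast ha
    push_cast at hE0 ⊢
    have e1' : S1 * (N * (4*P^2-1)) = P^2 * Dn := by
      rw [e1, div_mul_cancel₀ _ (mul_ne_zero hN0 hE0)]
    linear_combination (U:ℚ)^2 * e1' + (N:ℚ)*(4*P^2-1)*(U*V+P) * ha'
  have hUV' := M_int' hp 3 _ hUV
  have hS' := M_int' hp 3 _ hS
  have c4 : M (2*(2*k)+1) 0 ((1:ℚ)/4) := by
    have := M_inv hp _ (two_ndvd hp (by omega) 2); push_cast at this; norm_num at this; exact this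
  have c8 : M (2*(2*k)+1) 0 ((1:ℚ)/8) := by
    have := M_inv hp _ (two_ndvd hp (by omega) 3); push_cast at this; norm_num at this; exact this
  have c2 : M (2*(2*k)+1) 0 ((1:ℚ)/2) := by
    have := M_inv hp _ (two_ndvd hp (by omega) 1); push_cast at this; norm_num at this; exact this
  have i3 : M (2*(2*k)+1) 0 (3:ℚ) := by exact_mod_cast M_int hp 3
  have hxyq : (P:ℚ) = x^2 + 4*y^2 := by exact_mod_cast hxy
  have sm : ∀ {c a : ℚ}, M (2*(2*k)+1) 0 c → M (2*(2*k)+1) 3 a → M (2*(2*k)+1) 3 (c*a) := by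
    intro c a hc ha
    have := M_mul hp hc ha; simpa using this
  have hyd := ndvd_y _ hp x y hxy
  have hy0 := ne y hyd
  constructor
  · have t := M_add hp (M_sub hp (M_add hp hA (sm c4 m0)) (sm c4 m1)) (M_sub hp (sm c4 hS') (sm c2 hUV'))
    convert t using 1
    push_cast
    rw [hPQ] at hxyq ⊢
    linear_combination (-1:ℚ) * hxyq
  · have hfin : M (2*(2*k)+1) 3 ((V:ℚ)^2/4 + P^2/(64*y^2)) := by
      apply M_cancel hp y hyd
      apply M_cancel hp y hyd
      have h64 := two_ndvd hp (by omega) 6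
      apply M_cancel hp _ h64
      have := M_int' hp 3 _ (final_int _ hp x y U V hxy hU hUV hS)
      convert this using 1
      push_cast
      rw [hPQ]
      field_simp
      ring
    have t := M_add hp (M_sub hp (M_add hp hB (sm (M_mul hp i3 c8) m1)) (sm c8 m0)) (M_sub hp (M_sub hp (sm c4 hUV') (sm c8 hS')) hfin)
    convert t using 1
    push_cast
    rw [hPQ] at hxyq ⊢
    rw [show 2*(2*(k:ℚ))+1 = 4*k+1 by ring]
    linear_combination (1/2:ℚ) * hxyq
end
end S17

theorem statement17 (p : ℕ) (hp : p.Prime) (hp2 : p ≠ 2) :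
    (∀ x y : ℤ, p % 4 = 1 → (p : ℤ) = x^2 + 4*y^2 →
      ratCongr p 3
        (∑ n ∈ Finset.range p, (n:ℚ)^2 * seqT n / 4^n)
        (-4*(y:ℚ)^2) ∧
      ratCongr p 3
        (∑ n ∈ Finset.range p, (n:ℚ)^3 * seqT n / 4^n)
        (2*(y:ℚ)^2 + (p:ℚ)/4 + (p:ℚ)^2/(64*(y:ℚ)^2))) ∧
    (p % 4 = 3 →
      ratCongr p 2
        (∑ n ∈ Finset.range p, (n:ℚ)^2 * seqT n / 4^n)
        (-(1/4)*R1 p - (p:ℚ)/2) ∧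
      ratCongr p 2
        (∑ n ∈ Finset.range p, (n:ℚ)^3 * seqT n / 4^n)
        (3/8*R1 p + (p:ℚ)/2)) := by
  constructor
  · intro x y h1 hxy
    obtain ⟨k, rfl⟩ : ∃ k, p = 2*(2*k)+1 := ⟨p/4, by omega⟩
    have hk1 : 1 ≤ k := by
      by_contra h
      have : k = 0 := by omega
      subst this
      exact hp.one_lt.ne' rfl
    obtain ⟨hA, hB⟩ := S17.caseOne hk1 hp x y hxy
    exact ⟨S17.M_num hp hA, S17.M_num hp hB⟩
  · intro h3
    obtain ⟨k, hk⟩ : ∃ k, p = 4*k+3 := ⟨p/4, by omega⟩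
    have hb := S17.B3 k (hk ▸ hp)
    have hp' : (2*(2*k+1)+1).Prime := by
      rw [show 2*(2*k+1)+1 = p by omega]; exact hp
    obtain ⟨hA, hB⟩ := S17.case3 hp' k rfl
    have hpe : 2*(2*k+1)+1 = p := by omega
    have hpq : (2*((2*k+1:ℕ):ℚ)+1) = (p:ℚ) := by rw [← hpe]; push_cast; ring
    rw [hpe, hpq] at hA hB
    rw [← hk, hpq] at hb
    have c4 : S17.M p 0 ((1:ℚ)/4) := by
      have := S17.M_inv hp _ (S17.two_ndvd hp hp2 2); push_cast at this; norm_num at this; exact this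
    have c8 : S17.M p 0 ((3:ℚ)*(1/8)) := by
      have := S17.M_inv hp _ (S17.two_ndvd hp hp2 3); push_cast at this; norm_num at this
      have i3 : S17.M p 0 (3:ℚ) := by exact_mod_cast S17.M_int hp 3
      have := S17.M_mul hp i3 this
      simpa using this
    have t4 := S17.M_mul hp c4 hb
    have t8 := S17.M_mul hp c8 hb
    rw [zero_add] at t4 t8
    constructor
    · apply S17.M_num hp
      convert S17.M_sub hp hA t4 using 1
      ring
    · apply S17.M_num hp
      convert S17.M_add hp hB t8 using 1
      ring
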